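/- arXiv:1503.07955 — 2 statements merged into one kernel-verified Lean document; each statement's English description precedes it below -/
import Mathlib

section
/- Proposition 2.6(iii) (average characteristic polynomial for the product ensemble). For every x ∈ ℝ, ∫_{(0,∞)^N} ∏_{l=1}^N (x−x_l) 𝒫_N(x₁,…,x_N) dx₁⋯dx_N = (−1)^N ∏_{l=1}^r Γ(ν_l+N+1) · ∫₀^∞ u^{ν₀} e^{−u} Ψ(u;x) ∏_{l=1}^N (u+a_l) du. -/
open MeasureTheory Filter Topology

noncomputable section


/-- Pochhammer symbol `(a)_j` over `ℝ`. -/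
def poch (a : ℝ) (j : ℕ) : ℝ := ∏ i ∈ Finset.range j, (a + i)

/-- The hypergeometric function `₀F₁(b; z)` for complex argument `z`. -/
def hyp0F1 (b : ℝ) (z : ℂ) : ℂ :=
  ∑' k : ℕ, (Real.Gamma b : ℂ) * z ^ k /
    ((Nat.factorial k : ℂ) * (Real.Gamma (b + k) : ℂ))

/-- The hypergeometric function `₀F₁(b; z)` for real argument `z`. -/
def hyp0F1R (b z : ℝ) : ℝ :=
  ∑' k : ℕ, Real.Gamma b * z ^ k / (Nat.factorial k * Real.Gamma (b + k))

/-- The terminating hypergeometric sum `₁F₁(-k; b; u)`. -/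
def hyp1F1T (k : ℕ) (b u : ℝ) : ℝ :=
  ∑ j ∈ Finset.range (k + 1),
    poch (-(k : ℝ)) j / (poch b j * Nat.factorial j) * u ^ j

/-- The function `Ψ(u;x)` of the paper. -/
def Psi (r ν0 : ℕ) (ν : Fin r → ℕ) (u x : ℝ) : ℝ :=
  (1 / Real.Gamma ((ν0 : ℝ) + 1)) *
    ∑' k : ℕ, x ^ k / Nat.factorial k * hyp1F1T k ((ν0 : ℝ) + 1) u *
      ∏ l, 1 / Real.Gamma ((ν l : ℝ) + 1 + k)

/-- The positive orthant in `ℝ^r`. -/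
def posOrth (r : ℕ) : Set (Fin r → ℝ) := {t | ∀ i, 0 < t i}

/-- The function `Φ(v;y)` of the paper, complex `v`. -/
def Phi (r ν0 : ℕ) (ν : Fin r → ℕ) (v : ℂ) (y : ℝ) : ℂ :=
  ((1 / Real.Gamma ((ν0 : ℝ) + 1) : ℝ) : ℂ) *
    ∫ t in posOrth r,
      (((∏ i, (t i) ^ ((ν i : ℝ) - 1) * Real.exp (-t i)) *
          (y / ∏ i, t i) ^ ν0 * Real.exp (-(y / ∏ i, t i)) : ℝ) : ℂ) *
        hyp0F1 ((ν0 : ℝ) + 1) (-(v * ((y / ∏ i, t i : ℝ) : ℂ)))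

/-- The function `Φ(v;y)` of the paper, real `v`. -/
def PhiR (r ν0 : ℕ) (ν : Fin r → ℕ) (v y : ℝ) : ℝ :=
  (1 / Real.Gamma ((ν0 : ℝ) + 1)) *
    ∫ t in posOrth r,
      ((∏ i, (t i) ^ ((ν i : ℝ) - 1) * Real.exp (-t i)) *
          (y / ∏ i, t i) ^ ν0 * Real.exp (-(y / ∏ i, t i))) *
        hyp0F1R ((ν0 : ℝ) + 1) (-(v * (y / ∏ i, t i)))

/-- The double-contour-integral correlation kernel `K_N(x,y)` of Proposition 2.1,
with `C` the counterclockwise circle of center `c` and radius `R`. -/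
def KN (r ν0 N : ℕ) (ν : Fin r → ℕ) (a : Fin N → ℝ) (c : ℂ) (R : ℝ) (x y : ℝ) : ℂ :=
  ∫ u in Set.Ioi (0 : ℝ),
    (2 * Real.pi * Complex.I)⁻¹ *
      ∮ v in C(c, R),
        (u : ℂ) ^ ν0 * Complex.exp (-(u : ℂ) + v) * ((Psi r ν0 ν u x : ℝ) : ℂ) *
          Phi r ν0 ν v y * ((u : ℂ) - v)⁻¹ * ∏ l, ((u : ℂ) + (a l : ℂ)) / (v + (a l : ℂ))

/-- An admissible contour for `K_N`: a counterclockwise circle contained in the left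
half-plane which encloses all the points `-a l`. -/
def AdmCircle (N : ℕ) (a : Fin N → ℝ) (c : ℂ) (R : ℝ) : Prop :=
  0 < R ∧ c.re + R < 0 ∧ ∀ l, ‖-(a l : ℂ) - c‖ < R

/-- The Meijer G-function `G^{1,0}_{0,r+2}(—;0,-ν₀,…,-ν_r | z)`, complex argument. -/
def G1 (r ν0 : ℕ) (ν : Fin r → ℕ) (z : ℂ) : ℂ :=
  ∑' k : ℕ, (-z) ^ k /
    ((Nat.factorial k : ℂ) * (Real.Gamma ((ν0 : ℝ) + 1 + k) : ℂ) *
      ∏ l, (Real.Gamma ((ν l : ℝ) + 1 + k) : ℂ))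

/-- The Meijer G-function `G^{1,0}_{0,r+2}(—;0,-ν₀,…,-ν_r | z)`, real argument. -/
def G1R (r ν0 : ℕ) (ν : Fin r → ℕ) (z : ℝ) : ℝ :=
  ∑' k : ℕ, (-z) ^ k /
    (Nat.factorial k * Real.Gamma ((ν0 : ℝ) + 1 + k) *
      ∏ l, Real.Gamma ((ν l : ℝ) + 1 + k))

/-- `g₀(w) = ∑ (-1)^k w^{ν₀+k}/(k! Γ(ν₀+k+1))`, complex argument. -/
def g0C (ν0 : ℕ) (w : ℂ) : ℂ :=
  ∑' k : ℕ, (-1 : ℂ) ^ k * w ^ (ν0 + k) /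
    ((Nat.factorial k : ℂ) * (Real.Gamma ((ν0 : ℝ) + k + 1) : ℂ))

/-- `g₀(w)`, real argument. -/
def g0R (ν0 : ℕ) (w : ℝ) : ℝ :=
  ∑' k : ℕ, (-1 : ℝ) ^ k * w ^ (ν0 + k) /
    (Nat.factorial k * Real.Gamma ((ν0 : ℝ) + k + 1))

/-- The Meijer G-function `G^{r+1,0}_{0,r+2}(—;ν₀,…,ν_r,0 | z)` for `z > 0`, real form. -/
def G2R (r ν0 : ℕ) (ν : Fin r → ℕ) (z : ℝ) : ℝ :=
  ∫ t in posOrth r,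
    (∏ l, (t l) ^ ((ν l : ℝ) - 1) * Real.exp (-t l)) * g0R ν0 (z / ∏ l, t l)

/-- The critical hard-edge kernel `𝒦^{h,r}(ξ,η;τ)` of Theorem 1.2, the inner integral
running up the imaginary axis `v = i t`. -/
def Kcrit (r ν0 : ℕ) (ν : Fin r → ℕ) (G2 : ℂ → ℂ) (τ ξ η : ℝ) : ℂ :=
  (2 * Real.pi * Complex.I)⁻¹ *
    ∫ u in Set.Ioi (0 : ℝ), ∫ t : ℝ,
      ((u : ℂ) / (Complex.I * t)) ^ ν0 *
        Complex.exp (-(τ : ℂ) * u - (u : ℂ) ^ 2 / 2 + (τ : ℂ) * (Complex.I * t) +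
          (Complex.I * t) ^ 2 / 2) *
        ((u : ℂ) - Complex.I * t)⁻¹ * G1 r ν0 ν ((u * ξ : ℝ) : ℂ) *
        G2 (Complex.I * t * (η : ℂ)) * Complex.I

/-- The deformed critical kernel `𝒦^{h,r}_m(ξ,η;τ,σ)` of Theorem 1.3, the inner integral
running up the vertical line `Re v = -c`. -/
def KcritLine (r ν0 m : ℕ) (ν : Fin r → ℕ) (σ : ℕ → ℝ) (G2 : ℂ → ℂ) (c τ ξ η : ℝ) : ℂ :=
  (2 * Real.pi * Complex.I)⁻¹ *
    ∫ u in Set.Ioi (0 : ℝ), ∫ t : ℝ,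
      ((u : ℂ) / (-(c : ℂ) + Complex.I * t)) ^ ν0 *
        Complex.exp (-(τ : ℂ) * u - (u : ℂ) ^ 2 / 2 +
          (τ : ℂ) * (-(c : ℂ) + Complex.I * t) + (-(c : ℂ) + Complex.I * t) ^ 2 / 2) *
        ((u : ℂ) - (-(c : ℂ) + Complex.I * t))⁻¹ *
        (∏ j ∈ Finset.range m,
          ((u : ℂ) + (σ j : ℂ)) / ((-(c : ℂ) + Complex.I * t) + (σ j : ℂ))) *
        G1 r ν0 ν ((u * ξ : ℝ) : ℂ) * G2 ((-(c : ℂ) + Complex.I * t) * (η : ℂ)) * Complex.I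




/-- `Ψ(u;x)` in the case `r = 0`. -/
def Psi0 (ν0 : ℕ) (u x : ℝ) : ℝ :=
  Real.exp x * hyp0F1R ((ν0 : ℝ) + 1) (-(u * x)) / Real.Gamma ((ν0 : ℝ) + 1)

/-- `Φ(v;y)` in the case `r = 0`, complex `v`. -/
def Phi0 (ν0 : ℕ) (v : ℂ) (y : ℝ) : ℂ :=
  ((y ^ ν0 * Real.exp (-y) / Real.Gamma ((ν0 : ℝ) + 1) : ℝ) : ℂ) *
    hyp0F1 ((ν0 : ℝ) + 1) (-(v * (y : ℂ)))

/-- The kernel `K_N` in the case `r = 0`. -/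
def KN0 (ν0 N : ℕ) (a : Fin N → ℝ) (c : ℂ) (R : ℝ) (x y : ℝ) : ℂ :=
  ∫ u in Set.Ioi (0 : ℝ),
    (2 * Real.pi * Complex.I)⁻¹ *
      ∮ v in C(c, R),
        (u : ℂ) ^ ν0 * Complex.exp (-(u : ℂ) + v) * ((Psi0 ν0 u x : ℝ) : ℂ) *
          Phi0 ν0 v y * ((u : ℂ) - v)⁻¹ * ∏ l, ((u : ℂ) + (a l : ℂ)) / (v + (a l : ℂ))

/-- Laguerre polynomial `L_n^{ν}(x)`. -/
def laguerreL (n νp : ℕ) (x : ℝ) : ℝ :=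
  ∑ k ∈ Finset.range (n + 1),
    (-1 : ℝ) ^ k * (Nat.choose (n + νp) (n - k)) * x ^ k / Nat.factorial k

/-- The function `Ψ^{(μ)}(u;x)` of Section 4. -/
def PsiMu (r ν0 : ℕ) (μ ν : Fin r → ℕ) (u x : ℝ) : ℝ :=
  (1 / Real.Gamma ((ν0 : ℝ) + 1)) *
    ∑' k : ℕ, x ^ k / Nat.factorial k * hyp1F1T k ((ν0 : ℝ) + 1) u *
      ∏ l, Real.Gamma ((μ l : ℝ) + 1 + k) / Real.Gamma ((ν l : ℝ) + 1 + k)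

/-- The open unit cube in `ℝ^r`. -/
def unitCube (r : ℕ) : Set (Fin r → ℝ) := {t | ∀ i, 0 < t i ∧ t i < 1}

/-- The function `Φ^{(μ)}(v;y)` of Section 4, complex `v`. -/
def PhiMu (r ν0 : ℕ) (μ ν : Fin r → ℕ) (v : ℂ) (y : ℝ) : ℂ :=
  ((1 / (Real.Gamma ((ν0 : ℝ) + 1) * ∏ l, Real.Gamma ((μ l : ℝ) - (ν l : ℝ))) : ℝ) : ℂ) *
    ∫ t in unitCube r,
      (((∏ l, (t l) ^ ((ν l : ℝ) - 1) * (1 - t l) ^ ((μ l : ℝ) - (ν l : ℝ) - 1)) *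
          (y / ∏ l, t l) ^ ν0 * Real.exp (-(y / ∏ l, t l)) : ℝ) : ℂ) *
        hyp0F1 ((ν0 : ℝ) + 1) (-(v * ((y / ∏ l, t l : ℝ) : ℂ)))

/-- The function `Φ^{(μ)}(v;y)` of Section 4, real `v`. -/
def PhiMuR (r ν0 : ℕ) (μ ν : Fin r → ℕ) (v y : ℝ) : ℝ :=
  (1 / (Real.Gamma ((ν0 : ℝ) + 1) * ∏ l, Real.Gamma ((μ l : ℝ) - (ν l : ℝ)))) *
    ∫ t in unitCube r,
      ((∏ l, (t l) ^ ((ν l : ℝ) - 1) * (1 - t l) ^ ((μ l : ℝ) - (ν l : ℝ) - 1)) *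
          (y / ∏ l, t l) ^ ν0 * Real.exp (-(y / ∏ l, t l))) *
        hyp0F1R ((ν0 : ℝ) + 1) (-(v * (y / ∏ l, t l)))

/-- The kernel `K_N` for the truncated-unitary product of Section 4. -/
def KNmu (r ν0 N : ℕ) (μ ν : Fin r → ℕ) (a : Fin N → ℝ) (c : ℂ) (R : ℝ) (x y : ℝ) : ℂ :=
  ∫ u in Set.Ioi (0 : ℝ),
    (2 * Real.pi * Complex.I)⁻¹ *
      ∮ v in C(c, R),
        (u : ℂ) ^ ν0 * Complex.exp (-(u : ℂ) + v) * ((PsiMu r ν0 μ ν u x : ℝ) : ℂ) *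
          PhiMu r ν0 μ ν v y * ((u : ℂ) - v)⁻¹ * ∏ l, ((u : ℂ) + (a l : ℂ)) / (v + (a l : ℂ))

/-- Mixed domain `(0,1)^q × (0,∞)^{r-q}`. -/
def mixedSet (r q : ℕ) : Set (Fin r → ℝ) := {t | ∀ l, 0 < t l ∧ ((l : ℕ) < q → t l < 1)}

/-- The Meijer G-function `G^{1,q}_{q,r+2}(-μ₁,…,-μ_q; 0,-ν₀,…,-ν_r | z)`, real form. -/
def G1qR (r ν0 q : ℕ) (μ ν : Fin r → ℕ) (z : ℝ) : ℝ :=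
  ∑' k : ℕ, (-z) ^ k *
    (∏ l ∈ Finset.univ.filter fun l : Fin r => (l : ℕ) < q, Real.Gamma ((μ l : ℝ) + 1 + k)) /
    (Nat.factorial k * Real.Gamma ((ν0 : ℝ) + 1 + k) *
      ∏ l, Real.Gamma ((ν l : ℝ) + 1 + k))

/-- The Meijer G-function `G^{1,q}_{q,r+2}(-μ₁,…,-μ_q; 0,-ν₀,…,-ν_r | z)`, complex form. -/
def G1q (r ν0 q : ℕ) (μ ν : Fin r → ℕ) (z : ℂ) : ℂ :=
  ∑' k : ℕ, (-z) ^ k *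
    ((∏ l ∈ Finset.univ.filter fun l : Fin r => (l : ℕ) < q,
      Real.Gamma ((μ l : ℝ) + 1 + k) : ℝ) : ℂ) /
    ((Nat.factorial k : ℂ) * (Real.Gamma ((ν0 : ℝ) + 1 + k) : ℂ) *
      ∏ l, (Real.Gamma ((ν l : ℝ) + 1 + k) : ℂ))

/-- The Meijer G-function `G^{r+1,0}_{q,r+2}(μ₁,…,μ_q; ν₀,…,ν_r,0 | z)` for `z > 0`. -/
def G2qR (r ν0 q : ℕ) (μ ν : Fin r → ℕ) (z : ℝ) : ℝ :=
  ∫ t in mixedSet r q,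
    (∏ l : Fin r, if l.val < q then
        (t l) ^ ((ν l : ℝ) - 1) * (1 - t l) ^ ((μ l : ℝ) - (ν l : ℝ) - 1) /
          Real.Gamma ((μ l : ℝ) - (ν l : ℝ))
      else (t l) ^ ((ν l : ℝ) - 1) * Real.exp (-t l)) *
      g0R ν0 (z / ∏ l, t l)




/-- A companion-type matrix. -/
def compM (x : ℝ) (n : ℕ) (p : ℕ → ℝ) : Matrix (Fin (n+1)) (Fin (n+1)) ℝ :=
  Matrix.of fun i j => (if (i:ℕ) = j then x else 0) - (if (j:ℕ) = i + 1 then 1 else 0)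
    + (if (i:ℕ) = n then p j else 0)

lemma det_compM (x : ℝ) (n : ℕ) : ∀ p : ℕ → ℝ,
    (compM x n p).det = x^(n+1) + ∑ j ∈ Finset.range (n+1), p j * x^j := by
  induction n with
  | zero => intro p; simp [compM]
  | succ n ih =>
    intro p
    rw [Matrix.det_succ_column_zero, Fin.sum_univ_succ, Fin.sum_univ_castSucc]
    have h0 : (compM x (n+1) p).submatrix (Fin.succAbove 0) Fin.succ
        = compM x n (fun j => p (j+1)) := by
      ext i j; simp [compM]
    have h1 : ((compM x (n+1) p).submatrix (Fin.succAbove (Fin.last (n+1))) Fin.succ).det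
        = (-1)^(n+1) := by
      rw [Matrix.det_of_isLowerTriangular]
      · rw [Finset.prod_congr rfl (g := fun _ => (-1:ℝ))]
        · simp
        · intro i _
          have : (i:ℕ) ≠ n+1 := by omega
          simp [compM, this]
      · intro i j hij
        have hij' : (i:ℕ) < j := hij
        have h1 : (i:ℕ) ≠ n+1 := by omega
        have h2 : (i:ℕ) ≠ j + 1 := by omega
        have h3 : (j:ℕ) ≠ i := by omega
        simp [compM, h1, h2, h3]
    have h2 : ∀ i : Fin n, compM x (n+1) p (Fin.succ (Fin.castSucc i)) 0 = 0 := by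
      intro i
      have : (i:ℕ) ≠ n := by omega
      simp [compM, this]
    have h3 : compM x (n+1) p 0 0 = x := by simp [compM]
    have h4 : compM x (n+1) p (Fin.succ (Fin.last n)) 0 = p 0 := by simp [compM]
    rw [h0, ih, h3, h4, Fin.succ_last, h1]
    simp only [h2]
    rw [Finset.sum_range_succ' _ (n+1)]
    simp only [mul_zero, zero_mul, Finset.sum_const_zero, Fin.val_zero, Fin.val_last, pow_zero, Nat.succ_eq_add_one]
    have : ((-1:ℝ)^(n+1)) * (-1)^(n+1) = 1 := by rw [← mul_pow]; simp
    have h5 : ∑ i ∈ Finset.range (n+1), p (i+1) * x^(i+1)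
       = x * ∑ i ∈ Finset.range (n+1), p (i+1) * x^i := by
      rw [Finset.mul_sum]; exact Finset.sum_congr rfl fun i _ => by ring
    rw [h5]
    linear_combination (p 0) * this

lemma det_shift (n : ℕ) (x : ℝ) (G : ℕ → Fin (n+1) → ℝ) (p : ℕ → ℝ) (hp : p (n+1) = 1)
    (h : ∀ j, ∑ k ∈ Finset.range (n+2), p k * G k j = 0) :
    (Matrix.of fun i j : Fin (n+1) => x * G i j - G (i+1) j).det
      = (∑ k ∈ Finset.range (n+2), p k * x^k) * (Matrix.of fun i j : Fin (n+1) => G i j).det := by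
  have : (Matrix.of fun i j : Fin (n+1) => x * G i j - G (i+1) j)
      = compM x n p * (Matrix.of fun i j : Fin (n+1) => G i j) := by
    ext i j
    simp only [Matrix.mul_apply, compM, Matrix.of_apply, add_mul, sub_mul, Finset.sum_add_distrib,
      Finset.sum_sub_distrib]
    have e1 : ∑ k : Fin (n+1), (if (i:ℕ) = k then x else 0) * G k j = x * G i j := by
      rw [Finset.sum_eq_single i]
      · simp
      · intro b _ hb
        rw [if_neg (fun h => hb (Fin.ext h.symm)), zero_mul]
      · simp
    rw [e1]
    have e2 : ∑ k : Fin (n+1), (if (k:ℕ) = i+1 then (1:ℝ) else 0) * G k j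
        = ∑ k ∈ Finset.range (n+1), (if k = i+1 then (1:ℝ) else 0) * G k j :=
      Fin.sum_univ_eq_sum_range (fun k => (if k = i+1 then (1:ℝ) else 0) * G k j) (n+1)
    have e3 : ∑ k : Fin (n+1), (if (i:ℕ) = n then p k else 0) * G k j
        = ∑ k ∈ Finset.range (n+1), (if (i:ℕ) = n then p k else 0) * G k j :=
      Fin.sum_univ_eq_sum_range (fun k => (if (i:ℕ) = n then p k else 0) * G k j) (n+1)
    rw [e2, e3]
    by_cases hi : (i:ℕ) = n
    · have := h j
      rw [Finset.sum_range_succ, hp] at this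
      simp only [hi, if_true]
      rw [Finset.sum_eq_zero]
      · linarith
      · intro k hk
        have := Finset.mem_range.1 hk
        rw [if_neg (by omega), zero_mul]
    · simp only [hi, if_false, ite_mul, one_mul, zero_mul, Finset.sum_const_zero,
        Finset.sum_ite_eq', Finset.mem_range]
      rw [if_pos (by omega), add_zero]
  rw [this, Matrix.det_mul, det_compM, Finset.sum_range_succ _ (n+1), hp]
  ring

lemma andreief (N : ℕ) (μ : Measure ℝ) [SigmaFinite μ] (φ ψ : Fin N → ℝ → ℝ)
    (hphipsi : ∀ i j, Integrable (fun x => φ i x * ψ j x) μ) :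
    ∫ x : Fin N → ℝ, (Matrix.of fun i j => φ i (x j)).det * (Matrix.of fun i j => ψ i (x j)).det
      ∂(Measure.pi fun _ => μ)
    = (Nat.factorial N : ℝ) * (Matrix.of fun i j => ∫ x, φ i x * ψ j x ∂μ).det := by
  set G : Matrix (Fin N) (Fin N) ℝ := Matrix.of fun i j => ∫ x, φ i x * ψ j x ∂μ with hG
  have e : ∀ x : Fin N → ℝ,
      (Matrix.of fun i j => φ i (x j)).det * (Matrix.of fun i j => ψ i (x j)).det
      = ∑ τ : Equiv.Perm (Fin N), ∑ σ : Equiv.Perm (Fin N),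
        (((Equiv.Perm.sign τ : ℤ) : ℝ) * ((Equiv.Perm.sign σ : ℤ) : ℝ)) *
          ∏ j, (φ (σ j) (x j) * ψ (τ j) (x j)) := by
    intro x
    rw [Matrix.det_apply', Matrix.det_apply', Finset.sum_mul_sum, Finset.sum_comm]
    refine Finset.sum_congr rfl fun τ _ => Finset.sum_congr rfl fun σ _ => ?_
    simp only [Matrix.of_apply, Finset.prod_mul_distrib]
    ring
  simp_rw [e]
  have hi : ∀ τ σ : Equiv.Perm (Fin N), Integrable (fun x : Fin N → ℝ =>
      ∏ j, (φ (σ j) (x j) * ψ (τ j) (x j))) (Measure.pi fun _ => μ) := fun τ σ =>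
    Integrable.fintype_prod (f := fun j x => φ (σ j) x * ψ (τ j) x) fun j => hphipsi _ _
  rw [integral_finsetSum]
  · have : ∀ τ : Equiv.Perm (Fin N), (∫ x : Fin N → ℝ, ∑ σ : Equiv.Perm (Fin N),
        (((Equiv.Perm.sign τ : ℤ) : ℝ) * ((Equiv.Perm.sign σ : ℤ) : ℝ)) *
          ∏ j, (φ (σ j) (x j) * ψ (τ j) (x j)) ∂(Measure.pi fun _ => μ)) = G.det := by
      intro τ
      rw [integral_finsetSum]
      · have h2 := Matrix.det_permute' τ G
        have h3 : (((Equiv.Perm.sign τ : ℤ) : ℝ)) * (((Equiv.Perm.sign τ : ℤ) : ℝ)) = 1 := by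
          rw [← Int.cast_mul, ← Units.val_mul, Int.units_mul_self]; simp
        rw [show G.det = ((Equiv.Perm.sign τ : ℤ) : ℝ) * (G.submatrix id τ).det by
          rw [h2, ← mul_assoc, h3, one_mul], Matrix.det_apply', Finset.mul_sum]
        refine Finset.sum_congr rfl fun σ _ => ?_
        rw [integral_const_mul,
          integral_fintype_prod_eq_prod (fun j x => φ (σ j) x * ψ (τ j) x), mul_assoc]
        simp [hG]
      · intro σ _; exact (hi τ σ).const_mul _
    simp_rw [this]
    simp [Fintype.card_perm]
  · intro τ _; exact integrable_finsetSum _ fun σ _ => (hi τ σ).const_mul _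

/-- Coefficients of the moment polynomials. -/
def cA (v i m : ℕ) : ℝ := (i.choose m : ℝ) * (Nat.factorial (v + i) : ℝ) / Nat.factorial (v + m)

lemma cA_expand (v i k : ℕ) : (Nat.factorial (v + i + k) : ℝ) / Nat.factorial (v + k)
    = ∑ m ∈ Finset.range (i+1), cA v i m * (k.descFactorial m : ℝ) := by
  have h := Nat.add_choose_eq k (v + i) i
  rw [Finset.Nat.sum_antidiagonal_eq_sum_range_succ_mk] at h
  have h1 : ((k + (v+i)).choose i : ℝ) = (Nat.factorial (v + i + k) : ℝ) /
      (Nat.factorial i * Nat.factorial (v + k)) := by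
    rw [Nat.cast_choose ℝ (by omega)]
    rw [show k + (v+i) = v + i + k by ring, show v + i + k - i = v + k by omega]
  have h2 : (Nat.factorial (v + i + k) : ℝ) / Nat.factorial (v + k)
      = Nat.factorial i * ((k + (v+i)).choose i : ℝ) := by
    rw [h1]; field_simp
  rw [h2, h]
  push_cast
  rw [Finset.mul_sum]
  refine Finset.sum_congr rfl fun m hm => ?_
  have hm' : m ≤ i := Nat.lt_succ_iff.1 (Finset.mem_range.1 hm)
  rw [Nat.cast_choose ℝ (show i - m ≤ v + i by omega), Nat.descFactorial_eq_factorial_mul_choose,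
    cA, Nat.cast_choose ℝ hm', show v + i - (i - m) = v + m by omega]
  push_cast
  field_simp

lemma alt_choose (k m : ℕ) : ∑ j ∈ Finset.range (k+1), (-1:ℝ)^j * (k.choose j : ℝ) * (j.choose m : ℝ)
    = if m = k then (-1)^k else 0 := by
  have h : (-(Polynomial.X : Polynomial ℝ))^k
      = ∑ j ∈ Finset.range (k+1), Polynomial.C ((-1:ℝ)^j * (k.choose j : ℝ)) *
        (Polynomial.X + 1)^j := by
    rw [show -(Polynomial.X : Polynomial ℝ) = -(Polynomial.X + 1) + 1 by ring, add_pow]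
    refine Finset.sum_congr rfl fun j _ => ?_
    rw [neg_pow]
    simp
    ring
  have h2 := congrArg (fun q => Polynomial.coeff q m) h
  simp only [Polynomial.finsetSum_coeff, Polynomial.coeff_C_mul, Polynomial.coeff_X_add_one_pow] at h2
  rw [← h2, neg_pow, show (-1 : Polynomial ℝ)^k = Polynomial.C ((-1)^k) by simp,
    Polynomial.coeff_C_mul, Polynomial.coeff_X_pow]
  simp

lemma cA_alt (v p k : ℕ) : ∑ j ∈ Finset.range (k+1), (-1:ℝ)^j * (k.choose j : ℝ) *
      ((Nat.factorial (v + p + j) : ℝ) / Nat.factorial (v + j))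
    = (-1)^k * Nat.factorial k * cA v p k := by
  simp_rw [cA_expand, Finset.mul_sum]
  rw [Finset.sum_comm]
  have : ∀ m ∈ Finset.range (p+1), ∑ j ∈ Finset.range (k+1), (-1:ℝ)^j * (k.choose j : ℝ) *
      (cA v p m * (j.descFactorial m : ℝ)) =
      cA v p m * Nat.factorial m * if m = k then (-1)^k else 0 := by
    intro m _
    rw [← alt_choose, Finset.mul_sum]
    refine Finset.sum_congr rfl fun j _ => ?_
    rw [Nat.descFactorial_eq_factorial_mul_choose]; push_cast; ring
  rw [Finset.sum_congr rfl this]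
  simp only [mul_ite, mul_zero, Finset.sum_ite_eq', Finset.mem_range]
  split_ifs with h
  · ring
  · rw [cA, Nat.choose_eq_zero_of_lt (by omega)]; simp

/-- The moment polynomial. -/
def qA (v i : ℕ) (a : ℝ) : ℝ := ∑ m ∈ Finset.range (i+1), cA v i m * a^m

lemma cA_zero (v : ℕ) {p k : ℕ} (h : p < k) : cA v p k = 0 := by
  rw [cA, Nat.choose_eq_zero_of_lt h]; simp

lemma qA_ext (v : ℕ) {i n : ℕ} (h : i ≤ n) (a : ℝ) :
    qA v i a = ∑ m ∈ Finset.range (n+1), cA v i m * a^m := by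
  rw [qA]
  refine Finset.sum_subset (Finset.range_mono (by omega)) fun m _ hm => ?_
  rw [cA_zero v (by simpa using hm), zero_mul]

lemma qA_inv (v p : ℕ) (a : ℝ) :
    ∑ k ∈ Finset.range (p+1), (-1:ℝ)^k * cA v p k * qA v k a = (-a)^p := by
  have : ∀ k ∈ Finset.range (p+1), (-1:ℝ)^k * cA v p k * qA v k a
     = ∑ m ∈ Finset.range (p+1), ((-1:ℝ)^k * (p.choose k : ℝ) * (k.choose m : ℝ)) *
        ((Nat.factorial (v+p) : ℝ) / Nat.factorial (v + m) * a^m) := by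
    intro k hk
    rw [qA_ext v (Nat.lt_succ_iff.1 (Finset.mem_range.1 hk)), Finset.mul_sum]
    refine Finset.sum_congr rfl fun m _ => ?_
    rw [cA, cA]; field_simp
  rw [Finset.sum_congr rfl this, Finset.sum_comm]
  simp_rw [← Finset.sum_mul, alt_choose]
  simp only [ite_mul, zero_mul, Finset.sum_ite_eq', Finset.mem_range]
  rw [if_pos (by omega), div_self (by positivity), one_mul, neg_pow a]

lemma hasSum_desc (m : ℕ) (a : ℝ) :
    HasSum (fun k : ℕ => (k.descFactorial m : ℝ) * (a^k / Nat.factorial k)) (Real.exp a * a^m) := by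
  rw [← hasSum_nat_add_iff' m, Finset.sum_eq_zero, sub_zero]
  · have := (NormedSpace.expSeries_div_hasSum_exp a).mul_right (a^m)
    rw [← Real.exp_eq_exp_ℝ] at this
    convert! this using 2 with k
    rw [Nat.descFactorial_eq_div (by omega), Nat.cast_div (Nat.factorial_dvd_factorial (by omega))
      (by positivity), Nat.add_sub_cancel]
    field_simp
    rw [pow_add]
  · intro k hk
    rw [Nat.descFactorial_eq_zero_iff_lt.2 (Finset.mem_range.1 hk)]; simp

lemma hasSum_qA (v i : ℕ) (a : ℝ) :
    HasSum (fun k : ℕ => a^k / Nat.factorial k *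
      ((Nat.factorial (v + i + k) : ℝ) / Nat.factorial (v + k))) (Real.exp a * qA v i a) := by
  have := hasSum_sum (s := Finset.range (i+1)) (fun m _ => (hasSum_desc m a).mul_left (cA v i m))
  convert! this using 2 with k
  · rw [cA_expand, Finset.mul_sum]
    exact Finset.sum_congr rfl fun m _ => by ring
  · rw [qA, Finset.mul_sum]
    exact Finset.sum_congr rfl fun m _ => by ring

lemma gamma_int (n : ℕ) : IntegrableOn (fun u : ℝ => u^n * Real.exp (-u)) (Set.Ioi 0) ∧
    ∫ u in Set.Ioi (0:ℝ), u^n * Real.exp (-u) = Nat.factorial n := by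
  have h : (0:ℝ) < n + 1 := by positivity
  have e : ∀ u : ℝ, Real.exp (-u) * u ^ ((n:ℝ) + 1 - 1) = u^n * Real.exp (-u) := by
    intro u; rw [add_sub_cancel_right, Real.rpow_natCast, mul_comm]
  constructor
  · simpa only [e] using Real.GammaIntegral_convergent h
  · have := Real.Gamma_eq_integral h
    simp only [e] at this
    rw [← this, Real.Gamma_nat_eq_factorial]

lemma measurable_hyp0F1R (b : ℝ) : Measurable (hyp0F1R b) := by
  unfold hyp0F1R
  exact Measurable.tsum fun k => by fun_prop

lemma gamma_add (v k : ℕ) : Real.Gamma ((v:ℝ) + 1 + k) = Nat.factorial (v + k) := by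
  rw [← Real.Gamma_nat_eq_factorial]; congr 1; push_cast; ring

lemma hyp_moment (v i : ℕ) (a : ℝ) (ha : 0 < a) :
    ∫ s in Set.Ioi (0:ℝ), s^i * (s^v * Real.exp (-s) * hyp0F1R ((v:ℝ)+1) (a * s))
      = Nat.factorial v * (Real.exp a * qA v i a) := by
  set F : ℕ → ℝ → ℝ := fun k s => (Nat.factorial v * a^k / (Nat.factorial k * Nat.factorial (v+k))) *
    (s^(v+i+k) * Real.exp (-s)) with hF
  have hFi : ∀ k, Integrable (F k) (volume.restrict (Set.Ioi 0)) := fun k =>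
    (gamma_int _).1.const_mul _
  have hFv : ∀ k, ∫ s in Set.Ioi (0:ℝ), F k s = Nat.factorial v * (a^k / Nat.factorial k *
      ((Nat.factorial (v + i + k) : ℝ) / Nat.factorial (v + k))) := by
    intro k
    simp only [hF]
    rw [integral_const_mul, (gamma_int _).2]
    field_simp
  have hS := (hasSum_qA v i a).mul_left (Nat.factorial v : ℝ)
  have hn : ∀ k, ∫ s in Set.Ioi (0:ℝ), ‖F k s‖ = ∫ s in Set.Ioi (0:ℝ), F k s := by
    intro k
    refine setIntegral_congr_fun measurableSet_Ioi fun s hs => ?_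
    have hs' : (0:ℝ) < s := hs
    simp only [hF]
    rw [Real.norm_of_nonneg (by positivity)]
  have h := hasSum_integral_of_summable_integral_norm hFi (by
    simp only [hn, hFv]; exact hS.summable)
  simp only [hFv] at h
  rw [← h.unique hS]
  refine integral_congr_ae (ae_of_all _ fun s => ?_)
  simp only [hyp0F1R, hF]
  rw [← tsum_mul_left, ← tsum_mul_left]
  refine tsum_congr fun k => ?_
  rw [gamma_add, Real.Gamma_nat_eq_factorial]
  rw [mul_pow]
  ring

lemma qA_pos (v i : ℕ) (a : ℝ) (ha : 0 < a) : 0 < qA v i a := by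
  refine Finset.sum_pos (fun m hm => ?_) ⟨0, by simp⟩
  have : 0 < i.choose m := Nat.choose_pos (Nat.lt_succ_iff.1 (Finset.mem_range.1 hm))
  rw [cA]; positivity

lemma hyp0F1R_nonneg (v : ℕ) (z : ℝ) (hz : 0 ≤ z) : 0 ≤ hyp0F1R ((v:ℝ)+1) z := by
  refine tsum_nonneg fun k => ?_
  rw [gamma_add, Real.Gamma_nat_eq_factorial]
  positivity

lemma posOrth_eq (r : ℕ) : posOrth r = Set.univ.pi fun _ : Fin r => Set.Ioi (0:ℝ) := by
  ext t; simp [posOrth]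

lemma restrict_posOrth (r : ℕ) : (volume : Measure (Fin r → ℝ)).restrict (posOrth r)
    = Measure.pi fun _ => (volume : Measure ℝ).restrict (Set.Ioi 0) := by
  rw [posOrth_eq, volume_pi, Measure.restrict_pi_pi]

/-- The kernel function. -/
def hK (v : ℕ) (a s : ℝ) : ℝ := s^v * Real.exp (-s) * hyp0F1R ((v:ℝ)+1) (a * s)

lemma phi_moment (r v i : ℕ) (ν : Fin r → ℕ) (a : ℝ) (ha : 0 < a) :
    IntegrableOn (fun x => x^i * PhiR r v ν (-a) x) (Set.Ioi 0) ∧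
    ∫ x in Set.Ioi (0:ℝ), x^i * PhiR r v ν (-a) x
      = (∏ l, (Nat.factorial (ν l + i) : ℝ)) * (Real.exp a * qA v i a) := by
  set μ := (volume : Measure ℝ).restrict (Set.Ioi 0) with hμ
  set π := (volume : Measure (Fin r → ℝ)).restrict (posOrth r) with hπ
  set W : (Fin r → ℝ) → ℝ := fun t => ∏ i, (t i) ^ ((ν i : ℝ) - 1) * Real.exp (-t i) with hW
  set M := Nat.factorial v * (Real.exp a * qA v i a) with hM
  have hMpos : 0 < M := by have := qA_pos v i a ha; positivity
  set F : (Fin r → ℝ) × ℝ → ℝ := fun z => z.2^i * (W z.1 * hK v a (z.2 / ∏ l, z.1 l)) with hF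
  have hKm : Measurable (hK v a) := by
    unfold hK
    have := (measurable_hyp0F1R ((v:ℝ)+1)).comp (measurable_const_mul a)
    exact Measurable.mul (by fun_prop) this
  have hFm : Measurable F := by
    have h1 : Measurable W := by simp only [hW]; fun_prop
    have h2 : Measurable fun z : (Fin r → ℝ) × ℝ => z.2 / ∏ l, z.1 l := by fun_prop
    exact Measurable.mul (by fun_prop) ((h1.comp measurable_fst).mul (hKm.comp h2))
  have hmom : ∫ s, s^i * hK v a s ∂μ = M := hyp_moment v i a ha
  have hmomI : Integrable (fun s => s^i * hK v a s) μ :=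
    .of_integral_ne_zero (by rw [hmom]; exact hMpos.ne')
  have hpos : ∀ᵐ t ∂π, t ∈ posOrth r := by
    refine ae_restrict_mem ?_
    rw [posOrth_eq]; exact MeasurableSet.univ_pi fun _ => measurableSet_Ioi
  have hWpos : ∀ t ∈ posOrth r, 0 ≤ W t := fun t ht =>
    Finset.prod_nonneg fun l _ => by have := ht l; positivity
  have hscale : ∀ t ∈ posOrth r, Integrable (fun x => F (t, x)) μ ∧
      ∫ x, F (t, x) ∂μ = (∏ l, (t l)^(ν l + i) * Real.exp (-t l)) * M := by
    intro t ht
    have hT : 0 < ∏ l, t l := Finset.prod_pos fun l _ => ht l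
    set T := ∏ l, t l with hTdef
    have e : (fun x => F (t, x)) = fun x => (W t * T^i) * ((T⁻¹ * x)^i * hK v a (T⁻¹ * x)) := by
      funext x
      simp only [hF]
      rw [← hTdef, show x / T = T⁻¹ * x by ring]
      rw [mul_pow, inv_pow]
      field_simp
    rw [e]
    constructor
    · refine Integrable.const_mul ?_ _
      have := (integrableOn_Ioi_comp_mul_left_iff (fun s => s^i * hK v a s) 0 (inv_pos.2 hT)).2
        (by rw [mul_zero]; exact hmomI)
      exact this
    · rw [integral_const_mul]
      have := integral_comp_mul_left_Ioi (fun s => s^i * hK v a s) 0 (inv_pos.2 hT)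
      rw [mul_zero, inv_inv, smul_eq_mul] at this
      rw [hμ, this, ← hμ, hmom]
      have : W t * T^i * T = ∏ l, (t l)^(ν l + i) * Real.exp (-t l) := by
        rw [mul_assoc, ← pow_succ, hTdef, ← Finset.prod_pow, hW]
        simp only
        rw [← Finset.prod_mul_distrib]
        refine Finset.prod_congr rfl fun l _ => ?_
        have hl : 0 < t l := ht l
        rw [Real.rpow_sub_one hl.ne', Real.rpow_natCast, pow_add, pow_succ]
        field_simp
        try rw [pow_add]
      rw [← this]; ring
  have hnonneg : ∀ t ∈ posOrth r, ∀ x ∈ Set.Ioi (0:ℝ), 0 ≤ F (t, x) := by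
    intro t ht x hx
    have hT : 0 < ∏ l, t l := Finset.prod_pos fun l _ => ht l
    have hx' : (0:ℝ) < x := hx
    have := hyp0F1R_nonneg v (a * (x / ∏ l, t l)) (by positivity)
    have := hWpos t ht
    simp only [hF, hK]
    positivity
  have hprodI : Integrable (fun t : Fin r → ℝ => ∏ l, (t l)^(ν l + i) * Real.exp (-t l)) π := by
    rw [hπ, restrict_posOrth]
    exact Integrable.fintype_prod (f := fun l s => s^(ν l + i) * Real.exp (-s))
      fun l => (gamma_int _).1
  have hprodV : ∫ t : Fin r → ℝ, (∏ l, (t l)^(ν l + i) * Real.exp (-t l)) ∂π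
      = ∏ l, (Nat.factorial (ν l + i) : ℝ) := by
    rw [hπ, restrict_posOrth,
      integral_fintype_prod_eq_prod (fun l s => s^(ν l + i) * Real.exp (-s))]
    exact Finset.prod_congr rfl fun l _ => (gamma_int _).2
  have hFI : Integrable F (π.prod μ) := by
    rw [integrable_prod_iff hFm.aestronglyMeasurable]
    refine ⟨hpos.mono fun t ht => (hscale t ht).1, ?_⟩
    refine (hprodI.mul_const M).congr ?_
    filter_upwards [hpos] with t ht
    rw [← (hscale t ht).2]
    refine setIntegral_congr_fun measurableSet_Ioi fun x hx => ?_
    exact (Real.norm_of_nonneg (hnonneg t ht x hx)).symm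
  have hphi : ∀ x, x^i * PhiR r v ν (-a) x = (1 / (Nat.factorial v : ℝ)) * ∫ t, F (t, x) ∂π := by
    intro x
    simp only [PhiR, hF]
    rw [integral_const_mul, Real.Gamma_nat_eq_factorial, ← mul_assoc, mul_comm (x^i), mul_assoc]
    congr 2
    refine integral_congr_ae (ae_of_all _ fun t => ?_)
    simp only [hK, hW, neg_mul, neg_neg]
    ring
  simp only [hphi]
  refine ⟨(hFI.integral_prod_right).const_mul _, ?_⟩
  rw [integral_const_mul]
  have hsw : ∫ x, ∫ t, F (t, x) ∂π ∂μ = ∫ t, ∫ x, F (t, x) ∂μ ∂π :=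
    (integral_integral_swap (f := fun t x => F (t, x)) hFI).symm
  rw [hsw, integral_congr_ae (hpos.mono fun t ht => (hscale t ht).2), integral_mul_const, hprodV, hM]
  field_simp

lemma poch_neg_div (k j : ℕ) : poch (-(k:ℝ)) j / Nat.factorial j = (-1)^j * (k.choose j : ℝ) := by
  have h : poch (-(k:ℝ)) j = (-1)^j * (k.descFactorial j : ℝ) := by
    induction j with
    | zero => simp [poch]
    | succ j ih =>
      rw [poch, Finset.prod_range_succ, ← poch, ih, Nat.descFactorial_succ]
      push_cast
      rcases le_or_gt j k with hjk | hjk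
      · rw [Nat.cast_sub hjk]; ring
      · rw [Nat.descFactorial_eq_zero_iff_lt.2 hjk]; simp
  rw [h, Nat.descFactorial_eq_factorial_mul_choose]
  push_cast
  field_simp

lemma poch_fac (v j : ℕ) : poch ((v:ℝ)+1) j = (Nat.factorial (v+j) : ℝ) / Nat.factorial v := by
  induction j with
  | zero => simp [poch]; rw [div_self (by positivity)]
  | succ j ih =>
    rw [poch, Finset.prod_range_succ, ← poch, ih, ← add_assoc, Nat.factorial_succ]
    push_cast; ring

lemma hyp1F1T_eq (v k : ℕ) (u : ℝ) : hyp1F1T k ((v:ℝ)+1) u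
    = Nat.factorial v * ∑ j ∈ Finset.range (k+1),
      (-1:ℝ)^j * (k.choose j : ℝ) / Nat.factorial (v+j) * u^j := by
  rw [hyp1F1T, Finset.mul_sum]
  refine Finset.sum_congr rfl fun j _ => ?_
  rw [mul_comm (poch ((v:ℝ)+1) j), ← div_div, poch_neg_div, poch_fac]
  field_simp

lemma asc_bound (v p j : ℕ) : (Nat.factorial (v+p+j) : ℝ) / Nat.factorial (v+j)
    ≤ Nat.factorial p * 2^(v+p+j) := by
  have h1 : ((v+p+j).choose p : ℝ) = (Nat.factorial (v+p+j) : ℝ) /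
      (Nat.factorial p * Nat.factorial (v+j)) := by
    rw [Nat.cast_choose ℝ (by omega), show v+p+j-p = v+j by omega]
  have h2 : (Nat.factorial (v+p+j) : ℝ) / Nat.factorial (v+j)
      = Nat.factorial p * ((v+p+j).choose p : ℝ) := by rw [h1]; field_simp
  rw [h2]
  have : ((v+p+j).choose p : ℝ) ≤ 2^(v+p+j) := by exact_mod_cast Nat.choose_le_two_pow _ _
  gcongr

lemma three_pow (k : ℕ) : ∑ j ∈ Finset.range (k+1), (k.choose j : ℝ) * 2^j = 3^k := by
  have := add_pow (2:ℝ) 1 k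
  norm_num at this
  rw [this]
  exact Finset.sum_congr rfl fun j _ => by ring

lemma psi_int (r v N : ℕ) (ν : Fin r → ℕ) (e : ℕ → ℝ) (x : ℝ) :
    ∫ u in Set.Ioi (0:ℝ), u^v * Real.exp (-u) * Psi r v ν u x *
        ∑ p ∈ Finset.range (N+1), e p * u^p
      = ∑ k ∈ Finset.range (N+1), (x^k / ∏ l, (Nat.factorial (ν l + k) : ℝ)) *
        ((-1)^k * ∑ p ∈ Finset.range (N+1), e p * cA v p k) := by
  set C : ℕ → ℝ := fun k => ∏ l, (Nat.factorial (ν l + k) : ℝ) with hC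
  have hC1 : ∀ k, 1 ≤ C k := by
    intro k
    have : 0 < ∏ l, Nat.factorial (ν l + k) := Finset.prod_pos fun l _ => Nat.factorial_pos _
    simp only [hC]
    exact_mod_cast this
  set F : ℕ → ℝ → ℝ := fun k u => (x^k / Nat.factorial k / C k) *
    ∑ p ∈ Finset.range (N+1), ∑ j ∈ Finset.range (k+1),
      (e p * ((-1:ℝ)^j * (k.choose j : ℝ) / Nat.factorial (v+j))) *
        (u^(v+p+j) * Real.exp (-u)) with hF
  set B : ℕ → ℝ → ℝ := fun k u => (|x|^k / Nat.factorial k) *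
    ∑ p ∈ Finset.range (N+1), ∑ j ∈ Finset.range (k+1),
      (|e p| * ((k.choose j : ℝ) / Nat.factorial (v+j))) *
        (u^(v+p+j) * Real.exp (-u)) with hB
  have hFi : ∀ k, Integrable (F k) (volume.restrict (Set.Ioi 0)) := fun k =>
    (integrable_finsetSum _ fun p _ => integrable_finsetSum _ fun j _ =>
      (gamma_int _).1.const_mul _).const_mul _
  have hBi : ∀ k, Integrable (B k) (volume.restrict (Set.Ioi 0)) := fun k =>
    (integrable_finsetSum _ fun p _ => integrable_finsetSum _ fun j _ =>
      (gamma_int _).1.const_mul _).const_mul _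
  have hFv : ∀ k, ∫ u in Set.Ioi (0:ℝ), F k u = (x^k / C k) *
      ((-1)^k * ∑ p ∈ Finset.range (N+1), e p * cA v p k) := by
    intro k
    simp only [hF]
    rw [integral_const_mul, integral_finsetSum _ fun p _ => integrable_finsetSum _ fun j _ =>
      (gamma_int _).1.const_mul _]
    have : ∀ p ∈ Finset.range (N+1), ∫ u in Set.Ioi (0:ℝ), ∑ j ∈ Finset.range (k+1),
      (e p * ((-1:ℝ)^j * (k.choose j : ℝ) / Nat.factorial (v+j))) *
        (u^(v+p+j) * Real.exp (-u)) = e p * ((-1)^k * Nat.factorial k * cA v p k) := by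
      intro p _
      rw [integral_finsetSum _ fun j _ => (gamma_int _).1.const_mul _, ← cA_alt, Finset.mul_sum]
      refine Finset.sum_congr rfl fun j _ => ?_
      rw [integral_const_mul, (gamma_int _).2]; ring
    rw [Finset.sum_congr rfl this, Finset.mul_sum, Finset.mul_sum, Finset.mul_sum]
    refine Finset.sum_congr rfl fun p _ => ?_
    field_simp
  have hBv : ∀ k, ∫ u in Set.Ioi (0:ℝ), B k u ≤ (∑ p ∈ Finset.range (N+1),
      |e p| * (Nat.factorial p * 2^(v+p))) * ((3 * |x|)^k / Nat.factorial k) := by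
    intro k
    simp only [hB]
    rw [integral_const_mul, integral_finsetSum _ fun p _ => integrable_finsetSum _ fun j _ =>
      (gamma_int _).1.const_mul _]
    have : ∀ p ∈ Finset.range (N+1), ∫ u in Set.Ioi (0:ℝ), ∑ j ∈ Finset.range (k+1),
      (|e p| * ((k.choose j : ℝ) / Nat.factorial (v+j))) *
        (u^(v+p+j) * Real.exp (-u)) ≤ |e p| * (Nat.factorial p * 2^(v+p)) * 3^k := by
      intro p _
      rw [integral_finsetSum _ fun j _ => (gamma_int _).1.const_mul _, ← three_pow, Finset.mul_sum]
      refine Finset.sum_le_sum fun j _ => ?_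
      rw [integral_const_mul, (gamma_int _).2]
      calc |e p| * ((k.choose j : ℝ) / Nat.factorial (v+j)) * Nat.factorial (v+p+j)
          = |e p| * (k.choose j : ℝ) * ((Nat.factorial (v+p+j) : ℝ) / Nat.factorial (v+j)) := by ring
        _ ≤ |e p| * (k.choose j : ℝ) * (Nat.factorial p * 2^(v+p+j)) := by
            gcongr; exact asc_bound v p j
        _ = _ := by rw [pow_add 2 (v+p) j]; ring
    calc _ ≤ (|x|^k / Nat.factorial k) * ∑ p ∈ Finset.range (N+1),
          |e p| * (Nat.factorial p * 2^(v+p)) * 3^k := by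
            gcongr with p hp; exact this p hp
      _ = _ := by rw [← Finset.sum_mul, mul_pow]; ring
  have hle : ∀ k, ∫ u in Set.Ioi (0:ℝ), ‖F k u‖ ≤ ∫ u in Set.Ioi (0:ℝ), B k u := by
    intro k
    refine setIntegral_mono_on (hFi k).norm (hBi k) measurableSet_Ioi fun u hu => ?_
    have hu' : (0:ℝ) < u := hu
    simp only [hF, hB]
    rw [norm_mul]
    have hb : ∀ p j : ℕ, ‖(e p * ((-1:ℝ)^j * (k.choose j : ℝ) / Nat.factorial (v+j))) *
        (u^(v+p+j) * Real.exp (-u))‖ = (|e p| * ((k.choose j : ℝ) / Nat.factorial (v+j))) *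
        (u^(v+p+j) * Real.exp (-u)) := by
      intro p j
      rw [norm_mul, norm_mul, norm_div, norm_mul, norm_pow, norm_neg, norm_one, one_pow, one_mul,
        Real.norm_of_nonneg (by positivity : 0 ≤ u^(v+p+j) * Real.exp (-u)), Real.norm_eq_abs,
        Real.norm_natCast, Real.norm_natCast]
    refine mul_le_mul ?_ ?_ (norm_nonneg _) (by positivity)
    · have := hC1 k
      rw [norm_div, norm_div, norm_pow, Real.norm_natCast, 
        Real.norm_of_nonneg (by linarith : 0 ≤ C k), Real.norm_eq_abs]
      exact div_le_self (by positivity) this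
    · refine (norm_sum_le _ _).trans (Finset.sum_le_sum fun p _ => (norm_sum_le _ _).trans ?_)
      simp only [hb, le_refl]
  have hsum : Summable fun k => ∫ u in Set.Ioi (0:ℝ), ‖F k u‖ :=
    Summable.of_nonneg_of_le (fun k => integral_nonneg fun u => norm_nonneg _)
      (fun k => (hle k).trans (hBv k)) ((Real.summable_pow_div_factorial (3 * |x|)).mul_left _)
  have h := hasSum_integral_of_summable_integral_norm hFi hsum
  simp only [hFv] at h
  have h2 : HasSum (fun k => (x^k / C k) * ((-1)^k * ∑ p ∈ Finset.range (N+1), e p * cA v p k))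
      (∑ k ∈ Finset.range (N+1), (x^k / C k) *
        ((-1)^k * ∑ p ∈ Finset.range (N+1), e p * cA v p k)) := by
    refine hasSum_sum_of_ne_finset_zero ?_
    intro k hk
    rw [Finset.sum_eq_zero]
    · simp
    · intro p hp
      rw [Finset.mem_range] at hk hp
      rw [cA_zero v (by omega), mul_zero]
  rw [← h.unique h2]
  refine integral_congr_ae (ae_of_all _ fun u => ?_)
  simp only [Psi, hF]
  rw [← tsum_mul_left, ← tsum_mul_left, ← tsum_mul_right]
  refine tsum_congr fun k => ?_
  have hCk : ∏ l, 1 / Real.Gamma ((ν l : ℝ) + 1 + k) = 1 / C k := by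
    rw [hC]; simp only [gamma_add]; rw [Finset.prod_div_distrib]; simp
  have hs : ∑ p ∈ Finset.range (N+1), ∑ j ∈ Finset.range (k+1),
      (e p * ((-1:ℝ)^j * (k.choose j : ℝ) / Nat.factorial (v+j))) *
        (u^(v+p+j) * Real.exp (-u)) = u^v * Real.exp (-u) * (∑ j ∈ Finset.range (k+1),
      (-1:ℝ)^j * (k.choose j : ℝ) / Nat.factorial (v+j) * u^j) *
        ∑ p ∈ Finset.range (N+1), e p * u^p := by
    rw [mul_assoc, mul_comm (∑ j ∈ Finset.range (k+1), _), Finset.sum_mul_sum, Finset.mul_sum]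
    refine Finset.sum_congr rfl fun p _ => ?_
    rw [Finset.mul_sum]
    refine Finset.sum_congr rfl fun j _ => ?_
    rw [pow_add, pow_add]; ring
  have hCk0 : C k ≠ 0 := by have := hC1 k; positivity
  rw [hCk, hs, hyp1F1T_eq, Real.Gamma_nat_eq_factorial]
  field_simp

/-- **Proposition 2.6(iii)** (average characteristic polynomial for the product
ensemble). -/
theorem prop_2_6_iii (r ν0 N : ℕ) (hN : 0 < N) (ν : Fin r → ℕ) (a : Fin N → ℝ)
    (ha : ∀ j, 0 < a j) (hdist : Function.Injective a)
    (g : Matrix (Fin N) (Fin N) ℝ)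
    (hg : ∀ i j, g i j = ∫ x in Set.Ioi (0 : ℝ), x ^ (i : ℕ) * PhiR r ν0 ν (-(a j)) x)
    (hdet : g.det ≠ 0)
    (P : (Fin N → ℝ) → ℝ)
    (hP : ∀ x, P x = (1 / ((Nat.factorial N : ℝ) * g.det)) *
      (Matrix.of fun i j : Fin N => x j ^ (i : ℕ)).det *
      (Matrix.of fun i j : Fin N => PhiR r ν0 ν (-(a i)) (x j)).det)
    (x0 : ℝ) :
    ∫ x in {x : Fin N → ℝ | ∀ l, 0 < x l}, (∏ l, (x0 - x l)) * P x =
      (-1 : ℝ) ^ N * (∏ l, Real.Gamma ((ν l : ℝ) + N + 1)) *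
        ∫ u in Set.Ioi (0 : ℝ),
          u ^ ν0 * Real.exp (-u) * Psi r ν0 ν u x0 * ∏ l, (u + a l) := by
  obtain ⟨n, rfl⟩ : ∃ n, N = n + 1 := ⟨N - 1, by omega⟩
  -- the polynomial Q
  set Q : Polynomial ℝ := ∏ l, (Polynomial.X + Polynomial.C (a l)) with hQ
  have hQm : Q.Monic := Polynomial.monic_prod_of_monic _ _ fun l _ => Polynomial.monic_X_add_C _
  have hQd : Q.natDegree = n + 1 := by
    rw [hQ, Polynomial.natDegree_prod_of_monic _ _ fun l _ => Polynomial.monic_X_add_C _]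
    simp
  set e : ℕ → ℝ := fun p => Q.coeff p with he
  have heN : e (n+1) = 1 := by rw [he]; simp only; rw [← hQd]; exact hQm.coeff_natDegree
  have hQe : ∀ u : ℝ, ∏ l, (u + a l) = ∑ p ∈ Finset.range (n+1+1), e p * u^p := by
    intro u
    have : Q.eval u = ∏ l, (u + a l) := by rw [hQ, Polynomial.eval_prod]; simp
    rw [← this, Polynomial.eval_eq_sum_range, hQd]
  set C : ℕ → ℝ := fun k => ∏ l, (Nat.factorial (ν l + k) : ℝ) with hC
  have hC0 : ∀ k, C k ≠ 0 := fun k => Finset.prod_ne_zero_iff.2 fun l _ => by positivity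
  simp only [hQe]
  rw [psi_int]
  have hΓ : (∏ l, Real.Gamma ((ν l : ℝ) + ((n+1 : ℕ) : ℝ) + 1)) = C (n+1) := by
    rw [hC]; refine Finset.prod_congr rfl fun l _ => ?_
    rw [← gamma_add]; congr 1; ring
  rw [hΓ]
  set b : ℕ → ℝ := fun k => (-1)^k * ∑ p ∈ Finset.range (n+1+1), e p * cA ν0 p k with hb
  set p : ℕ → ℝ := fun k => (-1)^(n+1) * C (n+1) / C k * b k with hp
  have hpN : p (n+1) = 1 := by
    have : b (n+1) = (-1)^(n+1) := by
      rw [hb]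
      simp only
      rw [Finset.sum_range_succ, Finset.sum_eq_zero, heN]
      · rw [cA, Nat.choose_self]
        have : (Nat.factorial (ν0 + (n+1)) : ℝ) ≠ 0 := by positivity
        field_simp
        simp
      · intro q hq
        rw [cA_zero ν0 (Finset.mem_range.1 hq), mul_zero]
    rw [hp]
    simp only
    rw [this, mul_div_assoc, div_self (hC0 _), mul_one, ← mul_pow]
    simp
  set G : ℕ → Fin (n+1) → ℝ := fun i j => C i * (Real.exp (a j) * qA ν0 i (a j)) with hG
  have hmom : ∀ i j, ∫ x in Set.Ioi (0:ℝ), x^i * PhiR r ν0 ν (-(a j)) x = G i j := fun i j =>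
    (phi_moment r ν0 i ν (a j) (ha j)).2
  have hgG : g = Matrix.of fun i j : Fin (n+1) => G i j := by
    ext i j; rw [hg, hmom]; rfl
  have horth : ∀ j, ∑ k ∈ Finset.range (n+2), p k * G k j = 0 := by
    intro j
    have h1 : ∀ k ∈ Finset.range (n+2), p k * G k j = ((-1)^(n+1) * C (n+1) * Real.exp (a j)) *
        ∑ q ∈ Finset.range (n+2), e q * ((-1)^k * cA ν0 q k * qA ν0 k (a j)) := by
      intro k _
      have : ∑ q ∈ Finset.range (n+2), e q * ((-1)^k * cA ν0 q k * qA ν0 k (a j))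
          = b k * qA ν0 k (a j) := by
        rw [hb]; simp only; rw [Finset.mul_sum, Finset.sum_mul]
        exact Finset.sum_congr rfl fun q _ => by ring
      rw [this, hp, hG]
      simp only
      have := hC0 k
      field_simp
    rw [Finset.sum_congr rfl h1, ← Finset.mul_sum, Finset.sum_comm]
    have h2 : ∀ q ∈ Finset.range (n+2), ∑ k ∈ Finset.range (n+2),
        e q * ((-1)^k * cA ν0 q k * qA ν0 k (a j)) = e q * (-(a j))^q := by
      intro q hq
      rw [← Finset.mul_sum, ← qA_inv ν0 q (a j)]
      congr 1
      symm
      refine Finset.sum_subset (Finset.range_mono (by have := Finset.mem_range.1 hq; omega))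
        fun m _ hm => ?_
      rw [cA_zero ν0 (by simpa using hm), mul_zero, zero_mul]
    rw [Finset.sum_congr rfl h2, ← hQe, Finset.prod_eq_zero (Finset.mem_univ j) (by ring), mul_zero]
  have hshift := det_shift n x0 G p hpN horth
  -- left-hand side
  have hset : {x : Fin (n+1) → ℝ | ∀ l, 0 < x l} = posOrth (n+1) := rfl
  have hfun : ∀ x : Fin (n+1) → ℝ, (∏ l, (x0 - x l)) * P x =
      (1 / ((Nat.factorial (n+1) : ℝ) * g.det)) *
      ((Matrix.of fun i j : Fin (n+1) => (x0 - x j) * x j ^ (i:ℕ)).det *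
      (Matrix.of fun i j : Fin (n+1) => PhiR r ν0 ν (-(a i)) (x j)).det) := by
    intro x
    have := Matrix.det_mul_row (fun j => x0 - x j)
      (Matrix.of fun i j : Fin (n+1) => x j ^ (i : ℕ))
    rw [hP]
    simp only [Matrix.of_apply] at this
    rw [this]
    ring
  have hi : ∀ i j : Fin (n+1), Integrable (fun x => ((x0 - x) * x^(i:ℕ)) * PhiR r ν0 ν (-(a j)) x)
      (volume.restrict (Set.Ioi 0)) ∧ ∫ x in Set.Ioi (0:ℝ),
        ((x0 - x) * x^(i:ℕ)) * PhiR r ν0 ν (-(a j)) x = x0 * G i j - G (i+1) j := by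
    intro i j
    have h1 := (phi_moment r ν0 i ν (a j) (ha j)).1
    have h2 := (phi_moment r ν0 (i+1) ν (a j) (ha j)).1
    have e1 : (fun x => ((x0 - x) * x^(i:ℕ)) * PhiR r ν0 ν (-(a j)) x) = fun x =>
        x0 * (x^(i:ℕ) * PhiR r ν0 ν (-(a j)) x) - x^((i:ℕ)+1) * PhiR r ν0 ν (-(a j)) x := by
      funext x; ring
    rw [e1]
    refine ⟨(h1.const_mul _).sub h2, ?_⟩
    rw [integral_sub (h1.const_mul _) h2, integral_const_mul, hmom, hmom]
  rw [hset, restrict_posOrth]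
  simp only [hfun]
  rw [integral_const_mul, andreief (n+1) (volume.restrict (Set.Ioi 0))
    (fun i x => (x0 - x) * x^(i:ℕ)) (fun j x => PhiR r ν0 ν (-(a j)) x) (fun i j => (hi i j).1)]
  simp only [fun i j => (hi i j).2]
  rw [hshift, ← hgG]
  have hfac : (Nat.factorial (n+1) : ℝ) ≠ 0 := by positivity
  have hfin : ∑ k ∈ Finset.range (n+2), p k * x0^k = (-1)^(n+1) * C (n+1) *
      ∑ k ∈ Finset.range (n+1+1), x0^k / C k * b k := by
    rw [Finset.mul_sum]
    refine Finset.sum_congr rfl fun k _ => ?_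
    rw [hp]; ring
  have hcancel : ∀ X : ℝ, 1 / ((Nat.factorial (n+1) : ℝ) * g.det) *
      ((Nat.factorial (n+1) : ℝ) * (X * g.det)) = X := fun X => by field_simp
  rw [hcancel, hfin]

end
end

section
/- Theorem 3.4 (supercritical regime for r = 0: the limit is the shifted-mean LUE kernel with m sources). Fix an integer m ≥ 1, b > 1, and σ₁,…,σ_m > 0. For each N > m take a_j = σ_j b/(b−1) for 1 ≤ j ≤ m and a_k = bN for m+1 ≤ k ≤ N in the kernel K_N. Then for all ξ, η > 0, lim_{N→∞} e^{(1−1/b)(η−ξ)} (1−1/b) K_N((1−1/b)ξ, (1−1/b)η) = (1/(2πi)) (η^{ν₀}/Γ(ν₀+1)²) ∫₀^∞ ∮_{C′} ₀F₁(ν₀+1;−uξ) ₀F₁(ν₀+1;−vη) u^{ν₀} e^{−u+v} (u−v)^{−1} ∏_{j=1}^m ((u+σ_j)/(v+σ_j)) dv du, where C′ is any counterclockwise circle contained in {Re v < 0} enclosing −σ₁,…,−σ_m. -/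
open MeasureTheory Filter Topology

noncomputable section


/-! ### Contour splitting -/

lemma aux_cauchy {H : Set ℂ} {g : ℂ → ℂ} (hg : DifferentiableOn ℂ g H) (hH : IsOpen H)
    {c : ℂ} {R : ℝ} (hR : 0 ≤ R) (hb : Metric.closedBall c R ⊆ H) :
    (∮ v in C(c, R), g v) = 0 := by
  apply Complex.circleIntegral_eq_zero_of_differentiable_on_off_countable hR
    Set.countable_empty (hg.continuousOn.mono hb)
  intro z hz
  exact hg.differentiableAt (hH.mem_nhds (hb (Metric.ball_subset_closedBall hz.1)))

lemma aux_ne_ball {c p v : ℂ} {R : ℝ} (hp : p ∈ Metric.ball c R)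
    (hv : v ∈ Metric.sphere c R) : v - p ≠ 0 := by
  intro h
  have : v = p := sub_eq_zero.mp h
  subst this
  simp only [Metric.mem_ball, Metric.mem_sphere] at hp hv
  linarith

lemma aux_ne_closed {c p v : ℂ} {R : ℝ} (hp : p ∉ Metric.closedBall c R)
    (hv : v ∈ Metric.sphere c R) : v - p ≠ 0 := by
  intro h
  have : v = p := sub_eq_zero.mp h
  subst this
  exact hp (Metric.sphere_subset_closedBall hv)

lemma aux_single {H : Set ℂ} (hH : IsOpen H) (p : ℂ) (n : ℕ) :
    ∀ g : ℂ → ℂ, DifferentiableOn ℂ g H → ∃ val : ℂ, ∀ (c : ℂ) (R : ℝ), 0 < R →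
      Metric.closedBall c R ⊆ H → p ∈ Metric.ball c R →
      (∮ v in C(c, R), g v * ((v - p)⁻¹) ^ n) = val := by
  induction n with
  | zero =>
    intro g hg
    refine ⟨0, fun c R hR hb _ => ?_⟩
    simpa using aux_cauchy hg hH hR.le hb
  | succ n ih =>
    intro g hg
    by_cases hpH : p ∈ H
    · have hd : DifferentiableOn ℂ (dslope g p) H :=
        (Complex.differentiableOn_dslope (hH.mem_nhds hpH)).2 hg
      obtain ⟨val, hval⟩ := ih _ hd
      refine ⟨g p * (if n = 0 then 2 * Real.pi * Complex.I else 0) + val, ?_⟩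
      intro c R hR hb hp
      have hne : ∀ v ∈ Metric.sphere c R, v - p ≠ 0 := fun v hv => aux_ne_ball hp hv
      have hcinv : ContinuousOn (fun v : ℂ => (v - p)⁻¹) (Metric.sphere c R) :=
        ContinuousOn.inv₀ (by fun_prop) hne
      have h1 : (∮ v in C(c, R), g v * ((v - p)⁻¹) ^ (n + 1)) =
          ∮ v in C(c, R), (g p * ((v - p)⁻¹) ^ (n + 1) + dslope g p v * ((v - p)⁻¹) ^ n) := by
        apply circleIntegral.integral_congr hR.le
        intro v hv
        have h0 := hne v hv
        have h2 := sub_smul_dslope g p v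
        simp only [smul_eq_mul] at h2
        have h3 : g v = g p + (v - p) * dslope g p v := by rw [h2]; ring
        simp only []
        rw [h3, pow_succ]
        field_simp
      rw [h1, circleIntegral.integral_add, hval c R hR hb hp, circleIntegral.integral_const_mul]
      · congr 2
        by_cases hn : n = 0
        · subst hn
          simpa using circleIntegral.integral_sub_inv_of_mem_ball hp
        · rw [if_neg hn]
          have := circleIntegral.integral_sub_zpow_of_ne (n := -((n : ℤ) + 1)) (by omega) c p R
          rw [← this]
          congr 1
          ext v
          rw [zpow_neg, inv_pow]
          norm_cast
      · exact (ContinuousOn.mul continuousOn_const (hcinv.pow _)).circleIntegrable hR.le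
      · exact (((hd.continuousOn.mono hb).mono Metric.sphere_subset_closedBall).mul
          (hcinv.pow _)).circleIntegrable hR.le
    · exact ⟨0, fun c R hR hb hp => absurd (hb (Metric.ball_subset_closedBall hp)) hpH⟩

lemma aux_split {ι : Type} [DecidableEq ι] {H : Set ℂ} (hH : IsOpen H)
    {c c1 c2 : ℂ} {R R1 R2 : ℝ} (hR : 0 < R) (hR1 : 0 < R1) (hR2 : 0 < R2)
    (hb : Metric.closedBall c R ⊆ H) (hb1 : Metric.closedBall c1 R1 ⊆ H)
    (hb2 : Metric.closedBall c2 R2 ⊆ H) (p : ι → ℂ) (g : ℂ → ℂ) (hg : DifferentiableOn ℂ g H)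
    (n : ℕ) :
    ∀ T : Finset ι, T.card = n → (∀ i ∈ T, p i ∈ Metric.ball c R) →
      (∀ i ∈ T, (p i ∈ Metric.ball c1 R1 ∧ p i ∉ Metric.closedBall c2 R2) ∨
        (p i ∈ Metric.ball c2 R2 ∧ p i ∉ Metric.closedBall c1 R1)) →
      (∮ v in C(c, R), g v * ∏ i ∈ T, (v - p i)⁻¹) =
        (∮ v in C(c1, R1), g v * ∏ i ∈ T, (v - p i)⁻¹) +
        (∮ v in C(c2, R2), g v * ∏ i ∈ T, (v - p i)⁻¹) := by
  induction n with
  | zero =>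
    intro T hT _ _
    have : T = ∅ := Finset.card_eq_zero.mp hT
    subst this
    simp [aux_cauchy hg hH hR.le hb, aux_cauchy hg hH hR1.le hb1, aux_cauchy hg hH hR2.le hb2]
  | succ n ih =>
    intro T hT hin hor
    by_cases hall : ∀ i ∈ T, ∀ j ∈ T, p i = p j
    · obtain ⟨i0, hi0⟩ : T.Nonempty := Finset.card_pos.mp (by omega)
      have hprod : ∀ v : ℂ, ∏ i ∈ T, (v - p i)⁻¹ = ((v - p i0)⁻¹) ^ (n + 1) := by
        intro v
        rw [← hT]
        apply Finset.prod_eq_pow_card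
        intro i hi
        rw [hall i hi i0 hi0]
      simp only [hprod]
      obtain ⟨val, hval⟩ := aux_single hH (p i0) (n + 1) g hg
      rw [hval c R hR hb (hin _ hi0)]
      have hzero : ∀ (c' : ℂ) (R' : ℝ), 0 < R' → Metric.closedBall c' R' ⊆ H →
          p i0 ∉ Metric.closedBall c' R' →
          (∮ v in C(c', R'), g v * ((v - p i0)⁻¹) ^ (n + 1)) = 0 := by
        intro c' R' hR' hb' hp'
        apply aux_cauchy (H := H ∩ {p i0}ᶜ) _ (hH.inter isOpen_compl_singleton) hR'.le
        · intro z hz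
          refine ⟨hb' hz, ?_⟩
          rintro rfl
          exact hp' hz
        · apply DifferentiableOn.mul (hg.mono Set.inter_subset_left)
          apply DifferentiableOn.pow
          apply DifferentiableOn.inv
          · fun_prop
          · intro z hz
            exact sub_ne_zero.mpr hz.2
      rcases hor i0 hi0 with ⟨h1, h2⟩ | ⟨h2, h1⟩
      · rw [hval c1 R1 hR1 hb1 h1, hzero c2 R2 hR2 hb2 h2, add_zero]
      · rw [hval c2 R2 hR2 hb2 h2, hzero c1 R1 hR1 hb1 h1, zero_add]
    · push Not at hall
      obtain ⟨i, hi, j, hj, hij⟩ := hall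
      have hd : p i - p j ≠ 0 := sub_ne_zero.mpr hij
      have hne : i ≠ j := fun h => hij (by rw [h])
      have hci : (T.erase i).card = n := by rw [Finset.card_erase_of_mem hi]; omega
      have hcj : (T.erase j).card = n := by rw [Finset.card_erase_of_mem hj]; omega
      have ihi := ih (T.erase i) hci (fun k hk => hin k (Finset.mem_of_mem_erase hk))
        (fun k hk => hor k (Finset.mem_of_mem_erase hk))
      have ihj := ih (T.erase j) hcj (fun k hk => hin k (Finset.mem_of_mem_erase hk))
        (fun k hk => hor k (Finset.mem_of_mem_erase hk))
      have key : ∀ (c' : ℂ) (R' : ℝ), 0 < R' → Metric.closedBall c' R' ⊆ H →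
          (∀ v ∈ Metric.sphere c' R', ∀ k ∈ T, v - p k ≠ 0) →
          (∮ v in C(c', R'), g v * ∏ k ∈ T, (v - p k)⁻¹) =
            (p i - p j)⁻¹ * ((∮ v in C(c', R'), g v * ∏ k ∈ T.erase j, (v - p k)⁻¹) -
              ∮ v in C(c', R'), g v * ∏ k ∈ T.erase i, (v - p k)⁻¹) := by
        intro c' R' hR' hb' hnz
        have hcint : ∀ S ⊆ T, CircleIntegrable (fun v => g v * ∏ k ∈ S, (v - p k)⁻¹) c' R' := by
          intro S hS
          apply ContinuousOn.circleIntegrable hR'.le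
          apply ((hg.continuousOn.mono hb').mono Metric.sphere_subset_closedBall).mul
          apply continuousOn_finsetProd
          intro k hk
          exact ContinuousOn.inv₀ (by fun_prop) (fun v hv => hnz v hv k (hS hk))
        rw [← circleIntegral.integral_sub (hcint _ (Finset.erase_subset _ _))
          (hcint _ (Finset.erase_subset _ _)), ← circleIntegral.integral_const_mul]
        apply circleIntegral.integral_congr hR'.le
        intro v hv
        have hvi := hnz v hv i hi
        have hvj := hnz v hv j hj
        have e2 : ∏ k ∈ T.erase i, (v - p k)⁻¹ = (v - p j)⁻¹ *
            ∏ k ∈ (T.erase i).erase j, (v - p k)⁻¹ :=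
          (Finset.mul_prod_erase (T.erase i) (fun k => (v - p k)⁻¹)
            (Finset.mem_erase.mpr ⟨hne.symm, hj⟩)).symm
        have e1 : ∏ k ∈ T, (v - p k)⁻¹ = (v - p i)⁻¹ * ((v - p j)⁻¹ *
            ∏ k ∈ (T.erase i).erase j, (v - p k)⁻¹) := by
          rw [← e2]
          exact (Finset.mul_prod_erase T (fun k => (v - p k)⁻¹) hi).symm
        have e3 : ∏ k ∈ T.erase j, (v - p k)⁻¹ = (v - p i)⁻¹ *
            ∏ k ∈ (T.erase i).erase j, (v - p k)⁻¹ := by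
          rw [Finset.erase_right_comm]
          exact (Finset.mul_prod_erase (T.erase j) (fun k => (v - p k)⁻¹)
            (Finset.mem_erase.mpr ⟨hne, hi⟩)).symm
        simp only []
        rw [e1, e2, e3]
        field_simp
        ring
      rw [key c R hR hb (fun v hv k hk => aux_ne_ball (hin k hk) hv),
        key c1 R1 hR1 hb1 (fun v hv k hk => ?_), key c2 R2 hR2 hb2 (fun v hv k hk => ?_),
        ihi, ihj]
      · ring
      · rcases hor k hk with ⟨h1, h2⟩ | ⟨h2, h1⟩
        · exact aux_ne_closed h2 hv
        · exact aux_ne_ball h2 hv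
      · rcases hor k hk with ⟨h1, h2⟩ | ⟨h2, h1⟩
        · exact aux_ne_ball h1 hv
        · exact aux_ne_closed h1 hv

/-! ### The hypergeometric function -/

lemma aux_term_bound (ν0 k : ℕ) (z : ℂ) :
    ‖(Real.Gamma ((ν0 : ℝ) + 1) : ℂ) * z ^ k /
      ((Nat.factorial k : ℂ) * (Real.Gamma ((ν0 : ℝ) + 1 + k) : ℂ))‖ ≤
      ‖z‖ ^ k / (Nat.factorial k * Nat.factorial k) := by
  have h1 : Real.Gamma ((ν0 : ℝ) + 1) = Nat.factorial ν0 := Real.Gamma_nat_eq_factorial ν0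
  have h2 : Real.Gamma ((ν0 : ℝ) + 1 + k) = Nat.factorial (ν0 + k) := by
    rw [← Real.Gamma_nat_eq_factorial]
    congr 1
    push_cast
    ring
  have h3 : (Nat.factorial ν0 * Nat.factorial k : ℝ) ≤ Nat.factorial (ν0 + k) := by
    exact_mod_cast Nat.le_of_dvd (Nat.factorial_pos _)
      (Nat.factorial_mul_factorial_dvd_factorial_add ν0 k)
  rw [h1, h2]
  simp only [norm_div, norm_mul, norm_pow, Complex.ofReal_natCast, Complex.norm_natCast]
  have hk : (0 : ℝ) < Nat.factorial k := by exact_mod_cast Nat.factorial_pos k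
  have hv : (0 : ℝ) < Nat.factorial (ν0 + k) := by exact_mod_cast Nat.factorial_pos _
  rw [div_le_div_iff₀ (by positivity) (by positivity)]
  have : 0 ≤ ‖z‖ ^ k := by positivity
  calc (Nat.factorial ν0 : ℝ) * ‖z‖ ^ k * (Nat.factorial k * Nat.factorial k)
      = ‖z‖ ^ k * (Nat.factorial k * (Nat.factorial ν0 * Nat.factorial k)) := by ring
    _ ≤ _ := by gcongr

lemma aux_term_bound2 (ν0 k : ℕ) (z : ℂ) (ε : ℝ) (hε : 0 < ε) :
    ‖(Real.Gamma ((ν0 : ℝ) + 1) : ℂ) * z ^ k /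
      ((Nat.factorial k : ℂ) * (Real.Gamma ((ν0 : ℝ) + 1 + k) : ℂ))‖ ≤
      Real.exp (1 / ε) * ((ε * ‖z‖) ^ k / Nat.factorial k) := by
  refine (aux_term_bound ν0 k z).trans ?_
  have h := Real.pow_div_factorial_le_exp (1 / ε) (by positivity) k
  have hk : (0 : ℝ) < Nat.factorial k := by exact_mod_cast Nat.factorial_pos k
  calc ‖z‖ ^ k / (Nat.factorial k * Nat.factorial k)
      = ((1 / ε) ^ k / Nat.factorial k) * ((ε * ‖z‖) ^ k / Nat.factorial k) := by
        rw [div_mul_div_comm, ← mul_pow]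
        congr 2
        field_simp
    _ ≤ _ := by gcongr

lemma aux_hyp_bound (ν0 : ℕ) (z : ℂ) (ε : ℝ) (hε : 0 < ε) :
    ‖hyp0F1 ((ν0 : ℝ) + 1) z‖ ≤ Real.exp (1 / ε) * Real.exp (ε * ‖z‖) := by
  unfold hyp0F1
  have hs := (NormedSpace.expSeries_div_hasSum_exp (𝔸 := ℝ) (ε * ‖z‖)).mul_left
    (Real.exp (1 / ε))
  rw [← Real.exp_eq_exp_ℝ] at hs
  exact tsum_of_norm_bounded hs (fun k => aux_term_bound2 ν0 k z ε hε)

lemma aux_hyp_diff (ν0 : ℕ) : Differentiable ℂ (hyp0F1 ((ν0 : ℝ) + 1)) := by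
  intro z
  have hU : IsOpen (Metric.ball (0 : ℂ) (‖z‖ + 1)) := Metric.isOpen_ball
  have : DifferentiableOn ℂ (hyp0F1 ((ν0 : ℝ) + 1)) (Metric.ball (0 : ℂ) (‖z‖ + 1)) := by
    unfold hyp0F1
    apply Complex.differentiableOn_tsum_of_summable_norm
      (u := fun k => (‖z‖ + 1) ^ k / Nat.factorial k)
      (Real.summable_pow_div_factorial _) _ hU
    · intro k w hw
      have hw' : ‖w‖ ≤ ‖z‖ + 1 := by
        rw [mem_ball_zero_iff] at hw
        exact hw.le
      refine (aux_term_bound ν0 k w).trans ?_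
      have hk : (1 : ℝ) ≤ Nat.factorial k := by exact_mod_cast Nat.factorial_pos k
      gcongr
      nlinarith
    · intro k
      fun_prop
  exact this.differentiableAt (hU.mem_nhds (by simp))

lemma aux_hyp_real (b z : ℝ) : ((hyp0F1R b z : ℝ) : ℂ) = hyp0F1 b (z : ℂ) := by
  unfold hyp0F1R hyp0F1
  rw [Complex.ofReal_tsum]
  push_cast
  rfl

/-! ### The two factors of the integrand -/

def auxU (ν0 m N : ℕ) (b : ℝ) (α : ℕ → ℝ) (x u : ℝ) : ℂ :=
  (u : ℂ) ^ ν0 * Complex.exp (-(u : ℂ)) * hyp0F1 ((ν0 : ℝ) + 1) (-((u * x : ℝ) : ℂ)) *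
    (∏ j ∈ Finset.range m, ((u : ℂ) + (α j : ℂ))) * (1 + (u : ℂ) / (b * N)) ^ (N - m)

def auxUlim (ν0 m : ℕ) (b : ℝ) (α : ℕ → ℝ) (x u : ℝ) : ℂ :=
  (u : ℂ) ^ ν0 * Complex.exp (-(u : ℂ)) * hyp0F1 ((ν0 : ℝ) + 1) (-((u * x : ℝ) : ℂ)) *
    (∏ j ∈ Finset.range m, ((u : ℂ) + (α j : ℂ))) * Complex.exp ((u : ℂ) / b)

def auxW (ν0 m : ℕ) (α : ℕ → ℝ) (y : ℝ) (v : ℂ) : ℂ :=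
  Complex.exp v * hyp0F1 ((ν0 : ℝ) + 1) (-(v * (y : ℂ))) *
    (∏ j ∈ Finset.range m, (v + (α j : ℂ))⁻¹)

def auxV (ν0 m N : ℕ) (b : ℝ) (α : ℕ → ℝ) (y : ℝ) (v : ℂ) : ℂ :=
  auxW ν0 m α y v * ((1 + v / (b * N))⁻¹) ^ (N - m)

def auxVlim (ν0 m : ℕ) (b : ℝ) (α : ℕ → ℝ) (y : ℝ) (v : ℂ) : ℂ :=
  auxW ν0 m α y v * Complex.exp (-(v / b))

lemma aux_prodFin (N m : ℕ) (h : m ≤ N) (f : ℝ → ℂ) (α : ℕ → ℝ) (B : ℝ) :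
    ∏ l : Fin N, f (if (l : ℕ) < m then α l else B) =
      (∏ j ∈ Finset.range m, f (α j)) * f B ^ (N - m) := by
  rw [Fin.prod_univ_eq_prod_range (fun i => f (if i < m then α i else B)) N]
  obtain ⟨k, rfl⟩ := Nat.exists_eq_add_of_le h
  rw [Finset.prod_range_add]
  congr 1
  · apply Finset.prod_congr rfl
    intro i hi
    rw [if_pos (Finset.mem_range.mp hi)]
  · simp

lemma aux_pow_tendsto (b : ℝ) (hb : 1 < b) (m : ℕ) (w : ℂ) :
    Tendsto (fun N : ℕ => (1 + w / (b * N)) ^ (N - m)) atTop (𝓝 (Complex.exp (w / b))) := by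
  have hb0 : (b : ℂ) ≠ 0 := by exact_mod_cast (by linarith : b ≠ 0)
  have h1 := Complex.tendsto_one_add_div_pow_exp (w / b)
  have h0 : Tendsto (fun N : ℕ => 1 + w / b / (N : ℂ)) atTop (𝓝 1) := by
    have := (tendsto_inv_atTop_nhds_zero_nat (𝕜 := ℂ)).const_mul (w / b)
    simpa [div_eq_mul_inv] using this.const_add 1
  have h2 : Tendsto (fun N : ℕ => (1 + w / b / (N : ℂ)) ^ m) atTop (𝓝 1) := by
    simpa using h0.pow m
  have h3 := h1.div h2 one_ne_zero
  rw [div_one] at h3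
  refine h3.congr' ?_
  filter_upwards [eventually_ge_atTop m, h0.eventually_ne one_ne_zero] with N hN hne
  rw [pow_sub₀ _ (by rwa [← div_div]) hN]
  rw [← div_eq_mul_inv]
  simp only [Pi.div_apply, div_div]

lemma aux_U_tendsto (ν0 m : ℕ) (b : ℝ) (hb : 1 < b) (α : ℕ → ℝ) (x u : ℝ) :
    Tendsto (fun N : ℕ => auxU ν0 m N b α x u) atTop (𝓝 (auxUlim ν0 m b α x u)) :=
  (aux_pow_tendsto b hb m u).const_mul _

lemma aux_V_tendsto (ν0 m : ℕ) (b : ℝ) (hb : 1 < b) (α : ℕ → ℝ) (y : ℝ) (v : ℂ) :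
    Tendsto (fun N : ℕ => auxV ν0 m N b α y v) atTop (𝓝 (auxVlim ν0 m b α y v)) := by
  have h := (aux_pow_tendsto b hb m v).inv₀ (Complex.exp_ne_zero _)
  unfold auxV auxVlim
  simp only [inv_pow, Complex.exp_neg]
  exact h.const_mul _

lemma aux_poly_le (t c : ℝ) (ht : 0 ≤ t) (hc : 0 < c) (n : ℕ) :
    t ^ n ≤ (Nat.factorial n / c ^ n) * Real.exp (c * t) := by
  have h := Real.pow_div_factorial_le_exp (c * t) (by positivity) n
  have hn : (0 : ℝ) < Nat.factorial n := by exact_mod_cast Nat.factorial_pos n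
  rw [div_le_iff₀ hn, mul_pow] at h
  rw [div_mul_eq_mul_div, le_div_iff₀ (by positivity)]
  linarith

lemma aux_U_bound (ν0 m : ℕ) (b : ℝ) (hb : 1 < b) (α : ℕ → ℝ) (hα : ∀ j < m, 0 < α j)
    (x : ℝ) (hx : 0 < x) :
    ∃ K : ℝ, 0 ≤ K ∧ ∀ N : ℕ, 0 < N → ∀ u : ℝ, 0 < u →
      ‖auxU ν0 m N b α x u‖ ≤ K * Real.exp (-((1 - 1 / b) / 4) * u) := by
  have hs : 0 < 1 - 1 / b := by
    rw [sub_pos, div_lt_one (by linarith)]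
    exact hb
  set s := 1 - 1 / b with hsdef
  set A := ∑ j ∈ Finset.range m, α j with hA
  have hA0 : 0 ≤ A := Finset.sum_nonneg fun j hj => (hα j (Finset.mem_range.mp hj)).le
  refine ⟨(Nat.factorial ν0 / (s / 8) ^ ν0) * Real.exp (1 / (s / (2 * x))) *
    ((Nat.factorial m / (s / 8) ^ m) * Real.exp (s / 8 * A)), by positivity, ?_⟩
  intro N hN u hu
  have hN' : (0 : ℝ) < N := by exact_mod_cast hN
  have e1 : ‖(u : ℂ) ^ ν0‖ ≤ (Nat.factorial ν0 / (s / 8) ^ ν0) * Real.exp (s / 8 * u) := by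
    rw [norm_pow, Complex.norm_real, Real.norm_of_nonneg hu.le]
    exact aux_poly_le u (s / 8) hu.le (by positivity) ν0
  have e2 : ‖Complex.exp (-(u : ℂ))‖ = Real.exp (-u) := by
    rw [Complex.norm_exp]; simp
  have e3 : ‖hyp0F1 ((ν0 : ℝ) + 1) (-((u * x : ℝ) : ℂ))‖ ≤
      Real.exp (1 / (s / (2 * x))) * Real.exp (s / 2 * u) := by
    refine (aux_hyp_bound ν0 _ (s / (2 * x)) (by positivity)).trans (le_of_eq ?_)
    rw [norm_neg, Complex.norm_real, Real.norm_of_nonneg (by positivity)]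
    congr 2
    field_simp
  have e4 : ‖∏ j ∈ Finset.range m, ((u : ℂ) + (α j : ℂ))‖ ≤
      (Nat.factorial m / (s / 8) ^ m) * Real.exp (s / 8 * A) * Real.exp (s / 8 * u) := by
    rw [norm_prod]
    calc ∏ j ∈ Finset.range m, ‖(u : ℂ) + (α j : ℂ)‖
        ≤ ∏ j ∈ Finset.range m, (u + A) := by
          apply Finset.prod_le_prod (fun _ _ => norm_nonneg _)
          intro j hj
          have hj' := hα j (Finset.mem_range.mp hj)
          rw [← Complex.ofReal_add, Complex.norm_real, Real.norm_of_nonneg (by positivity)]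
          have := Finset.single_le_sum (f := α)
            (fun i hi => (hα i (Finset.mem_range.mp hi)).le) hj
          linarith
      _ = (u + A) ^ m := by simp
      _ ≤ (Nat.factorial m / (s / 8) ^ m) * Real.exp (s / 8 * (u + A)) :=
          aux_poly_le (u + A) (s / 8) (by positivity) (by positivity) m
      _ = _ := by rw [mul_assoc, ← Real.exp_add]; congr 2; ring
  have e5 : ‖(1 + (u : ℂ) / (b * N)) ^ (N - m)‖ ≤ Real.exp (u / b) := by
    have : (1 + (u : ℂ) / (b * N)) = ((1 + u / (b * N) : ℝ) : ℂ) := by push_cast; rfl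
    rw [this, norm_pow, Complex.norm_real, Real.norm_of_nonneg (by positivity)]
    have h1 : 1 ≤ 1 + u / (b * N) := by
      have : 0 ≤ u / (b * N) := by positivity
      linarith
    calc (1 + u / (b * N)) ^ (N - m) ≤ (1 + u / (b * N)) ^ N :=
          pow_le_pow_right₀ h1 (Nat.sub_le _ _)
      _ ≤ (Real.exp (u / (b * N))) ^ N := by
          gcongr
          rw [add_comm]
          exact Real.add_one_le_exp _
      _ = Real.exp (u / b) := by
          rw [← Real.exp_nat_mul]
          congr 1
          field_simp
  unfold auxU
  rw [norm_mul, norm_mul, norm_mul, norm_mul, e2]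
  calc _ ≤ (Nat.factorial ν0 / (s / 8) ^ ν0) * Real.exp (s / 8 * u) * Real.exp (-u) *
        (Real.exp (1 / (s / (2 * x))) * Real.exp (s / 2 * u)) *
        ((Nat.factorial m / (s / 8) ^ m) * Real.exp (s / 8 * A) * Real.exp (s / 8 * u)) *
        Real.exp (u / b) := by gcongr
    _ = _ := by
      have : Real.exp (-(s / 4) * u) = Real.exp (s / 8 * u) * Real.exp (-u) *
          Real.exp (s / 2 * u) * Real.exp (s / 8 * u) * Real.exp (u / b) := by
        simp only [← Real.exp_add]
        congr 1
        rw [hsdef]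
        field_simp
        ring
      rw [this]
      ring

lemma aux_W_cont (ν0 m : ℕ) (α : ℕ → ℝ) (y : ℝ) (S : Set ℂ)
    (hS : ∀ v ∈ S, ∀ j < m, v + (α j : ℂ) ≠ 0) : ContinuousOn (auxW ν0 m α y) S := by
  have hc : Continuous (hyp0F1 ((ν0 : ℝ) + 1)) := (aux_hyp_diff ν0).continuous
  unfold auxW
  apply ContinuousOn.mul
  · apply Continuous.continuousOn
    fun_prop
  · apply continuousOn_finsetProd
    intro j hj
    exact ContinuousOn.inv₀ (by fun_prop) (fun v hv => hS v hv j (Finset.mem_range.mp hj))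

lemma aux_V_bound1 (ν0 m : ℕ) (b : ℝ) (hb : 1 < b) (α : ℕ → ℝ) (y : ℝ) (c1 : ℂ) (R1 : ℝ)
    (hR1 : 0 < R1) (hα : ∀ j < m, ‖-(α j : ℂ) - c1‖ < R1) :
    ∃ C : ℝ, 0 ≤ C ∧ ∀ᶠ N : ℕ in atTop, ∀ v ∈ Metric.sphere c1 R1,
      ‖auxV ν0 m N b α y v‖ ≤ C := by
  have hW : ContinuousOn (auxW ν0 m α y) (Metric.sphere c1 R1) := by
    apply aux_W_cont
    intro v hv j hj h
    have : v = -(α j : ℂ) := eq_neg_of_add_eq_zero_left h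
    have h1 := hα j hj
    rw [← this, ← dist_eq_norm] at h1
    rw [Metric.mem_sphere] at hv
    linarith
  obtain ⟨C0, hC0⟩ := (isCompact_sphere c1 R1).exists_bound_of_continuousOn hW
  set M := ‖c1‖ + R1 with hM
  have hM0 : 0 < M := by positivity
  refine ⟨max C0 0 * Real.exp (2 * M / b), by positivity, ?_⟩
  filter_upwards [eventually_ge_atTop (⌈2 * M / b⌉₊ + 1)] with N hN v hv
  have hN1 : 2 * M / b ≤ N := (Nat.le_ceil _).trans (by exact_mod_cast (by omega))
  have hN0 : (0 : ℝ) < N := by exact_mod_cast (by omega : 0 < N)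
  have hvM : ‖v‖ ≤ M := by
    have : ‖v - c1‖ = R1 := by rw [← dist_eq_norm]; exact hv
    calc ‖v‖ = ‖c1 + (v - c1)‖ := by congr 1; ring
      _ ≤ _ := by rw [hM, ← this]; exact norm_add_le _ _
  set t := M / (b * N) with ht
  have ht0 : 0 < t := by positivity
  have ht2 : t ≤ 1 / 2 := by
    rw [ht, div_le_iff₀ (by positivity)]
    rw [div_le_iff₀ (by linarith)] at hN1
    linarith
  have hl : 1 - t ≤ ‖1 + v / (b * N)‖ := by
    have h1 : ‖v / (b * N)‖ ≤ t := by
      rw [norm_div, norm_mul, Complex.norm_real, Complex.norm_natCast,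
        Real.norm_of_nonneg (by linarith)]
      exact div_le_div_of_nonneg_right hvM (by positivity)
    have h2 := norm_sub_norm_le (1 : ℂ) (-(v / (b * N)))
    rw [norm_neg, norm_one, sub_neg_eq_add] at h2
    linarith
  have hinv : ‖(1 + v / (b * N))⁻¹‖ ≤ Real.exp (2 * t) := by
    rw [norm_inv]
    calc ‖1 + v / (b * N)‖⁻¹ ≤ (1 - t)⁻¹ := by gcongr; linarith
      _ ≤ 2 * t + 1 := by
        rw [inv_le_iff_one_le_mul₀ (by linarith)]
        nlinarith
      _ ≤ _ := Real.add_one_le_exp _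
  unfold auxV
  rw [norm_mul, norm_pow]
  apply mul_le_mul ((hC0 v hv).trans (le_max_left _ _)) _ (by positivity) (by positivity)
  calc ‖(1 + v / (b * N))⁻¹‖ ^ (N - m) ≤ Real.exp (2 * t) ^ (N - m) := by gcongr
    _ ≤ Real.exp (2 * t) ^ N :=
      pow_le_pow_right₀ (Real.one_le_exp (by positivity)) (Nat.sub_le _ _)
    _ = Real.exp (2 * M / b) := by
      rw [← Real.exp_nat_mul]
      congr 1
      rw [ht]
      field_simp

/-- Radius factor of the second circle. -/
lemma aux_sphere2 (b : ℝ) (hb : 1 < b) (N : ℕ) (v : ℂ)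
    (hv : v ∈ Metric.closedBall (-((b * N : ℝ) : ℂ)) (2 / (1 + b) * (b * N))) :
    v.re ≤ -((b - 1) / (b + 1) * (b * N)) := by
  rw [Metric.mem_closedBall, dist_eq_norm, sub_neg_eq_add] at hv
  have h1 := (Complex.re_le_norm (v + ((b * N : ℝ) : ℂ))).trans hv
  rw [Complex.add_re, Complex.ofReal_re] at h1
  have : 2 / (1 + b) * (b * N) - b * N = -((b - 1) / (b + 1) * (b * N)) := by
    field_simp
    ring
  linarith

lemma aux_V_bound2 (ν0 m : ℕ) (b : ℝ) (hb : 1 < b) (α : ℕ → ℝ) (hα : ∀ j < m, 0 < α j)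
    (y : ℝ) (hy : 0 < y) :
    ∃ C γ : ℝ, 0 ≤ C ∧ 0 < γ ∧ ∀ᶠ N : ℕ in atTop,
      ∀ v ∈ Metric.sphere (-((b * N : ℝ) : ℂ)) (2 / (1 + b) * (b * N)),
      ‖auxV ν0 m N b α y v‖ ≤ C * Real.exp (-γ * N) := by
  set γ := (b - 1) ^ 2 / (4 * (b + 1)) with hγ
  have hb1 : 0 < b - 1 := by linarith
  have hγ0 : 0 < γ := by positivity
  set A := ∑ j ∈ Finset.range m, α j with hA
  refine ⟨Real.exp (1 / (γ / (2 * b * y))), γ, by positivity, hγ0, ?_⟩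
  filter_upwards [eventually_ge_atTop (⌈(1 + A) / ((b - 1) / (b + 1) * b)⌉₊ + 1)] with N hN v hv
  have hN1 : (1 + A) / ((b - 1) / (b + 1) * b) ≤ N :=
    (Nat.le_ceil _).trans (by exact_mod_cast (by omega))
  have hN0 : (0 : ℝ) < N := by exact_mod_cast (by omega : 0 < N)
  rw [div_le_iff₀ (by positivity)] at hN1
  have hre := aux_sphere2 b hb N v (Metric.sphere_subset_closedBall hv)
  have hnv : ‖v + ((b * N : ℝ) : ℂ)‖ = 2 / (1 + b) * (b * N) := by
    rw [Metric.mem_sphere, dist_eq_norm, sub_neg_eq_add] at hv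
    exact hv
  have hbN : (0 : ℝ) < b * N := by positivity
  have hvle : ‖v‖ ≤ 2 * b * N := by
    have h1 := norm_sub_le (v + ((b * N : ℝ) : ℂ)) ((b * N : ℝ) : ℂ)
    rw [add_sub_cancel_right, hnv, Complex.norm_real, Real.norm_of_nonneg hbN.le] at h1
    have h2 : 2 / (1 + b) ≤ 1 := by rw [div_le_one (by linarith)]; linarith
    nlinarith
  have e1 : ‖Complex.exp v‖ ≤ Real.exp (-((b - 1) / (b + 1) * (b * N))) := by
    rw [Complex.norm_exp]
    exact Real.exp_le_exp.mpr hre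
  have e2 : ‖hyp0F1 ((ν0 : ℝ) + 1) (-(v * (y : ℂ)))‖ ≤
      Real.exp (1 / (γ / (2 * b * y))) * Real.exp (γ * N) := by
    refine (aux_hyp_bound ν0 _ (γ / (2 * b * y)) (by positivity)).trans ?_
    apply mul_le_mul_of_nonneg_left (Real.exp_le_exp.mpr _) (Real.exp_pos _).le
    rw [norm_neg, norm_mul, Complex.norm_real, Real.norm_of_nonneg hy.le]
    calc γ / (2 * b * y) * (‖v‖ * y) ≤ γ / (2 * b * y) * (2 * b * N * y) := by gcongr
      _ = γ * N := by field_simp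
  have e3 : ‖∏ j ∈ Finset.range m, (v + (α j : ℂ))⁻¹‖ ≤ 1 := by
    rw [norm_prod]
    apply Finset.prod_le_one (fun _ _ => norm_nonneg _)
    intro j hj
    rw [norm_inv]
    apply inv_le_one_of_one_le₀
    have h1 := Complex.abs_re_le_norm (v + (α j : ℂ))
    rw [Complex.add_re, Complex.ofReal_re] at h1
    have h2 := neg_le_abs (v.re + α j)
    have := Finset.single_le_sum (f := α)
      (fun i hi => (hα i (Finset.mem_range.mp hi)).le) hj
    linarith
  have e4 : ‖((1 + v / (b * N))⁻¹) ^ (N - m)‖ ≤ Real.exp ((b - 1) / 2 * N) := by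
    have h1 : 1 + v / (b * N) = (v + ((b * N : ℝ) : ℂ)) / ((b * N : ℝ) : ℂ) := by
      have : ((b * N : ℝ) : ℂ) ≠ 0 := by exact_mod_cast hbN.ne'
      push_cast at this ⊢
      rw [add_div, div_self this, add_comm]
    rw [norm_pow, norm_inv, h1, norm_div, hnv, Complex.norm_real, Real.norm_of_nonneg hbN.le,
      mul_div_assoc, div_self hbN.ne', mul_one, inv_div]
    calc ((1 + b) / 2) ^ (N - m) ≤ ((1 + b) / 2) ^ N :=
          pow_le_pow_right₀ (by linarith) (Nat.sub_le _ _)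
      _ ≤ Real.exp ((b - 1) / 2) ^ N := by
          gcongr
          have := Real.add_one_le_exp ((b - 1) / 2)
          linarith
      _ = _ := by rw [← Real.exp_nat_mul]; congr 1; ring
  unfold auxV auxW
  rw [norm_mul, norm_mul, norm_mul]
  calc _ ≤ Real.exp (-((b - 1) / (b + 1) * (b * N))) *
        (Real.exp (1 / (γ / (2 * b * y))) * Real.exp (γ * N)) * 1 *
        Real.exp ((b - 1) / 2 * N) := by gcongr
    _ = _ := by
      have : Real.exp (-γ * N) = Real.exp (-((b - 1) / (b + 1) * (b * N))) * Real.exp (γ * N) *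
          Real.exp ((b - 1) / 2 * N) := by
        simp only [← Real.exp_add]
        congr 1
        rw [hγ]
        field_simp
        ring
      rw [this]
      ring

/-! ### Convergence of the double integral -/

lemma aux_ball_left {c : ℂ} {R : ℝ} (h : c.re + R < 0) :
    Metric.closedBall c R ⊆ {z : ℂ | z.re < 0} := by
  intro z hz
  rw [Metric.mem_closedBall, dist_eq_norm] at hz
  have h1 := (Complex.re_le_norm (z - c)).trans hz
  rw [Complex.sub_re] at h1
  simp only [Set.mem_ofPred_eq]
  linarith

lemma aux_V_split (ν0 m : ℕ) (b : ℝ) (hb : 1 < b) (α : ℕ → ℝ) (hα : ∀ j < m, 0 < α j)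
    (y : ℝ) (c1 : ℂ) (R1 : ℝ) (hR1 : 0 < R1) (hl : c1.re + R1 < 0)
    (hencl : ∀ j < m, ‖-(α j : ℂ) - c1‖ < R1) :
    ∀ᶠ N : ℕ in atTop, ∀ (c : ℂ) (R : ℝ),
      AdmCircle N (fun j => if (j : ℕ) < m then α j else b * N) c R → ∀ u : ℝ, 0 < u →
      (∮ v in C(c, R), auxV ν0 m N b α y v * ((u : ℂ) - v)⁻¹) =
        (∮ v in C(c1, R1), auxV ν0 m N b α y v * ((u : ℂ) - v)⁻¹) +
        (∮ v in C(-((b * N : ℝ) : ℂ), 2 / (1 + b) * (b * N)),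
          auxV ν0 m N b α y v * ((u : ℂ) - v)⁻¹) := by
  have hb1 : 0 < b - 1 := by linarith
  set A := ∑ j ∈ Finset.range m, α j with hA
  filter_upwards [eventually_ge_atTop (⌈(1 + A) / ((b - 1) / (b + 1) * b)⌉₊ + 1),
    eventually_gt_atTop m, eventually_ge_atTop (⌈(‖c1‖ + R1) / b⌉₊ + 1)]
    with N hN hNm hN2 c R hadm u hu
  have hN1 : (1 + A) / ((b - 1) / (b + 1) * b) ≤ N :=
    (Nat.le_ceil _).trans (by exact_mod_cast (by omega))
  have hN3 : (‖c1‖ + R1) / b < N :=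
    (Nat.le_ceil _).trans_lt (by exact_mod_cast (by omega))
  have hN0 : (0 : ℝ) < N := by exact_mod_cast (by omega : 0 < N)
  rw [div_le_iff₀ (by positivity)] at hN1
  rw [div_lt_iff₀ (by positivity)] at hN3
  have hbN : (0 : ℝ) < b * N := by positivity
  obtain ⟨hR, hcl, hin⟩ := hadm
  set a : Fin N → ℝ := fun j => if (j : ℕ) < m then α j else b * N with ha
  set g : ℂ → ℂ := fun v => Complex.exp v * hyp0F1 ((ν0 : ℝ) + 1) (-(v * (y : ℂ))) *
    ((u : ℂ) - v)⁻¹ * ((b * N : ℝ) : ℂ) ^ (N - m) with hg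
  have hV : ∀ v : ℂ, auxV ν0 m N b α y v * ((u : ℂ) - v)⁻¹ =
      g v * ∏ l ∈ (Finset.univ : Finset (Fin N)), (v - (-(a l : ℂ)))⁻¹ := by
    intro v
    have h1 : ∏ l : Fin N, (v - (-(a l : ℂ)))⁻¹ =
        (∏ j ∈ Finset.range m, (v - (-(α j : ℂ)))⁻¹) *
          ((v - (-((b * N : ℝ) : ℂ)))⁻¹) ^ (N - m) :=
      aux_prodFin N m hNm.le (fun t => (v - (-(t : ℂ)))⁻¹) α (b * N)
    have h2 : (1 + v / (b * N))⁻¹ = ((b * N : ℝ) : ℂ) * (v + ((b * N : ℝ) : ℂ))⁻¹ := by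
      have h3 : 1 + v / (b * N) = (v + ((b * N : ℝ) : ℂ)) / ((b * N : ℝ) : ℂ) := by
        have : ((b * N : ℝ) : ℂ) ≠ 0 := by exact_mod_cast hbN.ne'
        push_cast at this ⊢
        rw [add_div, div_self this, add_comm]
      rw [h3, inv_div, div_eq_mul_inv]
    rw [h1, hg]
    unfold auxV auxW
    rw [h2, mul_pow]
    simp only [sub_neg_eq_add]
    ring
  simp only [hV]
  have hH : IsOpen {z : ℂ | z.re < 0} := isOpen_lt Complex.continuous_re continuous_const
  have hgd : DifferentiableOn ℂ g {z : ℂ | z.re < 0} := by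
    have hd := aux_hyp_diff ν0
    rw [hg]
    apply DifferentiableOn.mul _ (differentiableOn_const _)
    apply DifferentiableOn.mul
    · apply Differentiable.differentiableOn
      fun_prop
    · apply DifferentiableOn.inv (by fun_prop)
      intro v hv h
      have h1 := congrArg Complex.re h
      simp only [Complex.sub_re, Complex.ofReal_re, Complex.zero_re] at h1
      simp only [Set.mem_ofPred_eq] at hv
      linarith
  refine aux_split hH hR hR1 (by positivity) (aux_ball_left hcl) (aux_ball_left hl) ?_
    (fun l => -(a l : ℂ)) g hgd N Finset.univ (by simp) ?_ ?_
  · intro z hz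
    have h1 := aux_sphere2 b hb N z hz
    simp only [Set.mem_ofPred_eq]
    have : 0 < (b - 1) / (b + 1) * (b * N) := by positivity
    linarith
  · intro l _
    rw [Metric.mem_ball, dist_eq_norm]
    exact hin l
  · intro l _
    by_cases hlm : (l : ℕ) < m
    · left
      have hal : a l = α l := by simp [ha, hlm]
      constructor
      · rw [Metric.mem_ball, dist_eq_norm, hal]
        exact hencl l hlm
      · intro h
        have h1 := aux_sphere2 b hb N _ h
        rw [hal, Complex.neg_re, Complex.ofReal_re] at h1
        have := Finset.single_le_sum (f := α)
          (fun i hi => (hα i (Finset.mem_range.mp hi)).le) (Finset.mem_range.mpr hlm)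
        linarith
    · right
      have hal : a l = b * N := by simp [ha, hlm]
      constructor
      · rw [hal]
        exact Metric.mem_ball_self (by positivity)
      · rw [hal, Metric.mem_closedBall, dist_eq_norm, not_le]
        have h1 := norm_sub_norm_le (-((b * N : ℝ) : ℂ)) c1
        rw [norm_neg, Complex.norm_real, Real.norm_of_nonneg hbN.le] at h1
        linarith

lemma aux_inv_le (u : ℝ) (hu : 0 < u) (v : ℂ) (d : ℝ) (hd : 0 < d) (hv : v.re ≤ -d) :
    ‖((u : ℂ) - v)⁻¹‖ ≤ d⁻¹ := by
  rw [norm_inv]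
  gcongr
  have h1 := Complex.re_le_norm ((u : ℂ) - v)
  rw [Complex.sub_re, Complex.ofReal_re] at h1
  linarith

lemma aux_V_meas (ν0 m N : ℕ) (b : ℝ) (α : ℕ → ℝ) (y : ℝ) :
    Measurable (auxV ν0 m N b α y) := by
  have hc : Measurable (hyp0F1 ((ν0 : ℝ) + 1)) := (aux_hyp_diff ν0).continuous.measurable
  unfold auxV auxW
  fun_prop

lemma aux_U_meas (ν0 m N : ℕ) (b : ℝ) (α : ℕ → ℝ) (x : ℝ) :
    Measurable (auxU ν0 m N b α x) := by
  have hc : Measurable (hyp0F1 ((ν0 : ℝ) + 1)) := (aux_hyp_diff ν0).continuous.measurable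
  unfold auxU
  fun_prop

lemma aux_circle_meas (f : ℂ → ℂ) (hf : Measurable f) (c : ℂ) (R : ℝ) :
    StronglyMeasurable (fun u : ℝ => ∮ v in C(c, R), f v * ((u : ℂ) - v)⁻¹) := by
  unfold circleIntegral
  simp only [intervalIntegral.integral_of_le Real.two_pi_pos.le]
  apply StronglyMeasurable.integral_prod_right
  apply Measurable.stronglyMeasurable
  have h1 : Measurable (circleMap c R) := (continuous_circleMap c R).measurable
  have h2 : Measurable (deriv (circleMap c R)) := measurable_deriv _
  simp only [smul_eq_mul, Function.uncurry_def]
  fun_prop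

lemma aux_inner_tendsto (ν0 m : ℕ) (b : ℝ) (hb : 1 < b) (α : ℕ → ℝ)
    (y : ℝ) (c1 : ℂ) (R1 : ℝ) (hR1 : 0 < R1) (hl : c1.re + R1 < 0)
    (hencl : ∀ j < m, ‖-(α j : ℂ) - c1‖ < R1) (u : ℝ) (hu : 0 < u) :
    Tendsto (fun N : ℕ => ∮ v in C(c1, R1), auxV ν0 m N b α y v * ((u : ℂ) - v)⁻¹) atTop
      (𝓝 (∮ v in C(c1, R1), auxVlim ν0 m b α y v * ((u : ℂ) - v)⁻¹)) := by
  obtain ⟨C, hC0, hC⟩ := aux_V_bound1 ν0 m b hb α y c1 R1 hR1 hencl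
  unfold circleIntegral
  apply intervalIntegral.tendsto_integral_filter_of_dominated_convergence
    (fun _ => R1 * (C * (-(c1.re + R1))⁻¹))
  · refine Eventually.of_forall fun N => ?_
    have hm := aux_V_meas ν0 m N b α y
    have h1 : Measurable (circleMap c1 R1) := (continuous_circleMap c1 R1).measurable
    have h2 : Measurable (deriv (circleMap c1 R1)) := measurable_deriv _
    apply Measurable.aestronglyMeasurable
    simp only [smul_eq_mul]
    fun_prop
  · filter_upwards [hC] with N hN
    refine Eventually.of_forall fun θ _ => ?_
    have hs : circleMap c1 R1 θ ∈ Metric.sphere c1 R1 := circleMap_mem_sphere c1 hR1.le θ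
    rw [norm_smul, norm_mul, deriv_circleMap, norm_mul, norm_circleMap_zero, Complex.norm_I,
      mul_one, abs_of_pos hR1]
    have h1 := hN _ hs
    have h2 : (circleMap c1 R1 θ).re ≤ -(-(c1.re + R1)) := by
      rw [Metric.mem_sphere, dist_eq_norm] at hs
      have := Complex.re_le_norm (circleMap c1 R1 θ - c1)
      rw [Complex.sub_re] at this
      linarith
    have h3 := aux_inv_le u hu _ _ (by linarith) h2
    gcongr
  · exact intervalIntegrable_const
  · refine Eventually.of_forall fun θ _ => ?_
    exact ((aux_V_tendsto ν0 m b hb α y _).mul_const _).const_smul _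

lemma aux_main (ν0 m : ℕ) (b : ℝ) (hb : 1 < b) (α : ℕ → ℝ) (hα : ∀ j < m, 0 < α j)
    (x y : ℝ) (hx : 0 < x) (hy : 0 < y) (c1 : ℂ) (R1 : ℝ) (hR1 : 0 < R1)
    (hl : c1.re + R1 < 0) (hencl : ∀ j < m, ‖-(α j : ℂ) - c1‖ < R1)
    (cc : ℕ → ℂ) (RR : ℕ → ℝ)
    (hadm : ∀ N : ℕ, m < N →
      AdmCircle N (fun j => if (j : ℕ) < m then α j else b * N) (cc N) (RR N)) :
    Tendsto (fun N : ℕ => ∫ u in Set.Ioi (0 : ℝ), auxU ν0 m N b α x u *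
      ∮ v in C(cc N, RR N), auxV ν0 m N b α y v * ((u : ℂ) - v)⁻¹) atTop
      (𝓝 (∫ u in Set.Ioi (0 : ℝ), auxUlim ν0 m b α x u *
        ∮ v in C(c1, R1), auxVlim ν0 m b α y v * ((u : ℂ) - v)⁻¹)) := by
  obtain ⟨K, hK0, hK⟩ := aux_U_bound ν0 m b hb α hα x hx
  obtain ⟨C, hC0, hC⟩ := aux_V_bound1 ν0 m b hb α y c1 R1 hR1 hencl
  obtain ⟨D, γ, hD0, hγ, hD⟩ := aux_V_bound2 ν0 m b hb α hα y hy
  have hsplit := aux_V_split ν0 m b hb α hα y c1 R1 hR1 hl hencl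
  have hs : 0 < 1 - 1 / b := by
    rw [sub_pos, div_lt_one (by linarith)]
    exact hb
  have hb1 : 0 < b - 1 := by linarith
  set d := -(c1.re + R1) with hd
  have hd0 : 0 < d := by linarith
  -- bound for the first circle
  have hI1 : ∀ᶠ N : ℕ in atTop, ∀ u : ℝ, 0 < u →
      ‖∮ v in C(c1, R1), auxV ν0 m N b α y v * ((u : ℂ) - v)⁻¹‖ ≤
        2 * Real.pi * R1 * (C * d⁻¹) := by
    filter_upwards [hC] with N hN u hu
    apply circleIntegral.norm_integral_le_of_norm_le_const hR1.le
    intro v hv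
    rw [norm_mul]
    have h1 := hN v hv
    have h2 : v.re ≤ -d := by
      rw [Metric.mem_sphere, dist_eq_norm] at hv
      have := Complex.re_le_norm (v - c1)
      rw [Complex.sub_re] at this
      linarith
    have h3 := aux_inv_le u hu v d hd0 h2
    gcongr
  -- bound for the second circle
  have hI2 : ∀ᶠ N : ℕ in atTop, ∀ u : ℝ, 0 < u →
      ‖∮ v in C(-((b * N : ℝ) : ℂ), 2 / (1 + b) * (b * N)),
        auxV ν0 m N b α y v * ((u : ℂ) - v)⁻¹‖ ≤
        2 * Real.pi * (2 / (1 + b)) * D * ((b - 1) / (b + 1))⁻¹ * Real.exp (-γ * N) := by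
    filter_upwards [hD, eventually_gt_atTop 0] with N hN hNpos u hu
    have hN0 : (0 : ℝ) < N := by exact_mod_cast hNpos
    have h := circleIntegral.norm_integral_le_of_norm_le_const
      (f := fun v => auxV ν0 m N b α y v * ((u : ℂ) - v)⁻¹)
      (c := -((b * N : ℝ) : ℂ)) (R := 2 / (1 + b) * (b * N))
      (C := D * Real.exp (-γ * N) * ((b - 1) / (b + 1) * (b * N))⁻¹) (by positivity) ?_
    · refine h.trans (le_of_eq ?_)
      field_simp
    · intro v hv
      rw [norm_mul]
      have h1 := hN v hv
      have h2 := aux_sphere2 b hb N v (Metric.sphere_subset_closedBall hv)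
      have h3 := aux_inv_le u hu v _ (by positivity) h2
      gcongr
  set E := 2 * Real.pi * (2 / (1 + b)) * D * ((b - 1) / (b + 1))⁻¹ with hE
  have hE0 : 0 ≤ E := by positivity
  apply tendsto_integral_filter_of_dominated_convergence
    (fun u => (K * (2 * Real.pi * R1 * (C * d⁻¹) + E)) *
      Real.exp (-((1 - 1 / b) / 4) * u))
  · refine Eventually.of_forall fun N => ?_
    exact ((aux_U_meas ν0 m N b α x).stronglyMeasurable.mul
      (aux_circle_meas _ (aux_V_meas ν0 m N b α y) _ _)).aestronglyMeasurable
  · filter_upwards [hI1, hI2, hsplit, eventually_gt_atTop m] with N h1 h2 h3 hNm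
    rw [ae_restrict_iff' measurableSet_Ioi]
    refine Eventually.of_forall fun u hu => ?_
    have hu' : 0 < u := hu
    rw [norm_mul, h3 _ _ (hadm N hNm) u hu']
    have e1 := hK N (by omega) u hu'
    have e2 : ‖(∮ v in C(c1, R1), auxV ν0 m N b α y v * ((u : ℂ) - v)⁻¹) +
        (∮ v in C(-((b * N : ℝ) : ℂ), 2 / (1 + b) * (b * N)),
          auxV ν0 m N b α y v * ((u : ℂ) - v)⁻¹)‖ ≤ 2 * Real.pi * R1 * (C * d⁻¹) + E := by
      refine (norm_add_le _ _).trans (add_le_add (h1 u hu') ((h2 u hu').trans ?_))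
      apply mul_le_of_le_one_right hE0
      rw [Real.exp_le_one_iff]
      have : 0 ≤ γ * N := by positivity
      linarith
    calc _ ≤ (K * Real.exp (-((1 - 1 / b) / 4) * u)) *
          (2 * Real.pi * R1 * (C * d⁻¹) + E) := by gcongr
      _ = _ := by ring
  · exact (exp_neg_integrableOn_Ioi 0 (by positivity)).const_mul _
  · rw [ae_restrict_iff' measurableSet_Ioi]
    refine Eventually.of_forall fun u hu => ?_
    have hu' : 0 < u := hu
    apply (aux_U_tendsto ν0 m b hb α x u).mul
    have t1 := aux_inner_tendsto ν0 m b hb α y c1 R1 hR1 hl hencl u hu'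
    have t2 : Tendsto (fun N : ℕ => ∮ v in C(-((b * N : ℝ) : ℂ), 2 / (1 + b) * (b * N)),
        auxV ν0 m N b α y v * ((u : ℂ) - v)⁻¹) atTop (𝓝 0) := by
      apply squeeze_zero_norm' (a := fun N : ℕ => E * Real.exp (-γ * N))
      · filter_upwards [hI2] with N hN
        exact hN u hu'
      · have h1 : Tendsto (fun N : ℕ => -γ * (N : ℝ)) atTop atBot :=
          tendsto_natCast_atTop_atTop.const_mul_atTop_of_neg (by linarith)
        simpa using (Real.tendsto_exp_atBot.comp h1).const_mul E
    have t3 := t1.add t2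
    rw [add_zero] at t3
    refine t3.congr' ?_
    filter_upwards [hsplit, eventually_gt_atTop m] with N h3 hNm
    rw [h3 _ _ (hadm N hNm) u hu']

lemma aux_KN_eq (ν0 m N : ℕ) (hN : m < N) (b : ℝ) (hb : 1 < b) (α : ℕ → ℝ) (c : ℂ) (R : ℝ)
    (x y : ℝ) :
    KN0 ν0 N (fun j => if (j : ℕ) < m then α j else b * N) c R x y =
      (2 * Real.pi * Complex.I)⁻¹ *
        ((Real.exp x * (y ^ ν0 * Real.exp (-y)) / Real.Gamma ((ν0 : ℝ) + 1) ^ 2 : ℝ) : ℂ) *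
        ∫ u in Set.Ioi (0 : ℝ), auxU ν0 m N b α x u *
          ∮ v in C(c, R), auxV ν0 m N b α y v * ((u : ℂ) - v)⁻¹ := by
  unfold KN0
  have hN0 : (0 : ℝ) < N := by exact_mod_cast (by omega : 0 < N)
  have hbN : (0 : ℝ) < b * N := by positivity
  have hbN' : (b * N : ℂ) ≠ 0 := by exact_mod_cast hbN.ne'
  rw [← integral_const_mul]
  congr 1
  ext u
  rw [mul_assoc (2 * (Real.pi : ℂ) * Complex.I)⁻¹, ← mul_assoc _ (auxU ν0 m N b α x u)]
  congr 1
  rw [← circleIntegral.integral_const_mul]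
  refine congrArg (fun f : ℂ → ℂ => circleIntegral f c R) (funext fun v => ?_)
  have h1 : ∏ l : Fin N, ((u : ℂ) + ((if (l : ℕ) < m then α l else b * N : ℝ) : ℂ)) /
      (v + ((if (l : ℕ) < m then α l else b * N : ℝ) : ℂ)) =
      (∏ j ∈ Finset.range m, ((u : ℂ) + (α j : ℂ)) / (v + (α j : ℂ))) *
        (((u : ℂ) + ((b * N : ℝ) : ℂ)) / (v + ((b * N : ℝ) : ℂ))) ^ (N - m) :=
    aux_prodFin N m hN.le (fun t => ((u : ℂ) + (t : ℂ)) / (v + (t : ℂ))) α (b * N)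
  have h3 : ∀ w : ℂ, w + ((b * N : ℝ) : ℂ) = (b * N) * (1 + w / (b * N)) := by
    intro w
    push_cast
    have h4 : ((b : ℂ) * (N : ℂ)) * (w / (b * N)) = w := mul_div_cancel₀ w hbN'
    rw [mul_add, mul_one, h4, add_comm]
  rw [h1, h3, h3, mul_div_mul_left _ _ hbN', Finset.prod_div_distrib, div_pow]
  unfold auxU auxV auxW Psi0 Phi0
  rw [Complex.exp_add]
  simp only [div_eq_mul_inv, Finset.prod_inv_distrib, inv_pow]
  push_cast
  rw [aux_hyp_real]
  push_cast
  ring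

lemma aux_circle_scale (f : ℂ → ℂ) (c : ℂ) (R κ : ℝ) :
    (∮ v in C((κ : ℂ) * c, κ * R), f v) = (κ : ℂ) * ∮ v in C(c, R), f ((κ : ℂ) * v) := by
  have hm : ∀ θ, circleMap ((κ : ℂ) * c) (κ * R) θ = (κ : ℂ) * circleMap c R θ := by
    intro θ
    simp only [circleMap]
    push_cast
    ring
  have hm0 : ∀ θ, circleMap 0 (κ * R) θ = (κ : ℂ) * circleMap 0 R θ := by
    intro θ
    simp only [circleMap]
    push_cast
    ring
  rw [← circleIntegral.integral_const_mul]
  unfold circleIntegral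
  congr 1
  ext θ
  rw [deriv_circleMap, deriv_circleMap, hm, hm0]
  simp only [smul_eq_mul]
  ring

/-- **Theorem 3.4** (supercritical regime for `r = 0`: the limit is the shifted-mean
LUE kernel with `m` sources). -/
theorem thm_3_4 (ν0 m : ℕ) (hm : 1 ≤ m) (b : ℝ) (hb : 1 < b)
    (σ : ℕ → ℝ) (hσ : ∀ j < m, 0 < σ j)
    (cc : ℕ → ℂ) (RR : ℕ → ℝ)
    (hadm : ∀ N : ℕ, m < N →
      AdmCircle N (fun j => if (j : ℕ) < m then σ j * b / (b - 1) else b * N)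
        (cc N) (RR N))
    (c' : ℂ) (R' : ℝ) (hR' : 0 < R') (hleft : c'.re + R' < 0)
    (hencl : ∀ j < m, ‖-(σ j : ℂ) - c'‖ < R')
    (ξ η : ℝ) (hξ : 0 < ξ) (hη : 0 < η) :
    Tendsto
      (fun N : ℕ =>
        ((Real.exp ((1 - 1 / b) * (η - ξ)) * (1 - 1 / b) : ℝ) : ℂ) *
          KN0 ν0 N (fun j => if (j : ℕ) < m then σ j * b / (b - 1) else b * N)
            (cc N) (RR N) ((1 - 1 / b) * ξ) ((1 - 1 / b) * η))
      atTop
      (𝓝 ((2 * Real.pi * Complex.I)⁻¹ *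
        ((η ^ ν0 / Real.Gamma ((ν0 : ℝ) + 1) ^ 2 : ℝ) : ℂ) *
        ∫ u in Set.Ioi (0 : ℝ),
          ∮ v in C(c', R'),
            hyp0F1 ((ν0 : ℝ) + 1) (-((u * ξ : ℝ) : ℂ)) *
              hyp0F1 ((ν0 : ℝ) + 1) (-(v * (η : ℂ))) *
              (u : ℂ) ^ ν0 * Complex.exp (-(u : ℂ) + v) * ((u : ℂ) - v)⁻¹ *
              ∏ j ∈ Finset.range m, ((u : ℂ) + (σ j : ℂ)) / (v + (σ j : ℂ)))) := by
  have hb0 : 0 < b := by linarith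
  have hb1 : 0 < b - 1 := by linarith
  set κ := b / (b - 1) with hκ
  have hκ0 : 0 < κ := by positivity
  set s := 1 - 1 / b with hs
  have hsκ : s * κ = 1 := by
    rw [hs, hκ]
    field_simp
  have hs0 : 0 < s := pos_of_mul_pos_left (by rw [hsκ]; exact one_pos) hκ0.le
  set α : ℕ → ℝ := fun j => σ j * b / (b - 1) with hα
  have hακ : ∀ j, α j = κ * σ j := by
    intro j
    simp only [hα, hκ]
    ring
  have hαpos : ∀ j < m, 0 < α j := by
    intro j hj
    rw [hακ]
    exact mul_pos hκ0 (hσ j hj)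
  have hl : ((κ : ℂ) * c').re + κ * R' < 0 := by
    rw [Complex.re_ofReal_mul]
    nlinarith
  have hencl1 : ∀ j < m, ‖-(α j : ℂ) - (κ : ℂ) * c'‖ < κ * R' := by
    intro j hj
    have : -(α j : ℂ) - (κ : ℂ) * c' = (κ : ℂ) * (-(σ j : ℂ) - c') := by
      rw [hακ]
      push_cast
      ring
    rw [this, norm_mul, Complex.norm_real, Real.norm_of_nonneg hκ0.le]
    exact mul_lt_mul_of_pos_left (hencl j hj) hκ0
  have hmain := aux_main ν0 m b hb α hαpos (s * ξ) (s * η) (by positivity) (by positivity)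
    ((κ : ℂ) * c') (κ * R') (by positivity) hl hencl1 cc RR hadm
  have hmain2 := hmain.const_mul ((2 * Real.pi * Complex.I)⁻¹ *
    ((s * (s * η) ^ ν0 / Real.Gamma ((ν0 : ℝ) + 1) ^ 2 : ℝ) : ℂ))
  have hκC : (κ : ℂ) ≠ 0 := by exact_mod_cast hκ0.ne'
  have hκb : (κ : ℂ) - κ / b = 1 := by
    have : κ - κ / b = 1 := by rw [← hsκ, hs]; ring
    exact_mod_cast this
  have hsκC : (s : ℂ) * κ = 1 := by exact_mod_cast hsκ
  have hpt : ∀ (u : ℝ) (v : ℂ), auxUlim ν0 m b α (s * ξ) (κ * u) *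
      (auxVlim ν0 m b α (s * η) ((κ : ℂ) * v) * (((κ * u : ℝ) : ℂ) - (κ : ℂ) * v)⁻¹) =
      ((κ : ℂ) ^ ν0 * (κ : ℂ)⁻¹) * (hyp0F1 ((ν0 : ℝ) + 1) (-((u * ξ : ℝ) : ℂ)) *
              hyp0F1 ((ν0 : ℝ) + 1) (-(v * (η : ℂ))) *
              (u : ℂ) ^ ν0 * Complex.exp (-(u : ℂ) + v) * ((u : ℂ) - v)⁻¹ *
              ∏ j ∈ Finset.range m, ((u : ℂ) + (σ j : ℂ)) / (v + (σ j : ℂ))) := by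
    intro u v
    unfold auxUlim auxVlim auxW
    have e1 : κ * u * (s * ξ) = u * ξ := by
      linear_combination (u * ξ) * hsκ
    have e2 : (κ : ℂ) * v * ((s * η : ℝ) : ℂ) = v * η := by
      push_cast
      linear_combination (v * η) * hsκC
    have e3 : (((κ * u : ℝ) : ℂ) - (κ : ℂ) * v)⁻¹ = (κ : ℂ)⁻¹ * ((u : ℂ) - v)⁻¹ := by
      push_cast
      rw [← mul_sub, mul_inv]
    have e4 : ∏ j ∈ Finset.range m, ((u : ℂ) + (σ j : ℂ)) / (v + (σ j : ℂ)) =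
        (∏ j ∈ Finset.range m, (((κ * u : ℝ) : ℂ) + (α j : ℂ))) *
        ∏ j ∈ Finset.range m, ((κ : ℂ) * v + (α j : ℂ))⁻¹ := by
      rw [← Finset.prod_mul_distrib]
      apply Finset.prod_congr rfl
      intro j _
      rw [hακ]
      push_cast
      rw [← mul_add, ← mul_add, ← div_eq_mul_inv, mul_div_mul_left _ _ hκC]
    have e5 : Complex.exp (-(u : ℂ) + v) = Complex.exp (-((κ * u : ℝ) : ℂ)) *
        Complex.exp (((κ * u : ℝ) : ℂ) / b) * Complex.exp ((κ : ℂ) * v) *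
        Complex.exp (-((κ : ℂ) * v / b)) := by
      simp only [← Complex.exp_add]
      congr 1
      push_cast
      linear_combination ((u : ℂ) - v) * hκb
    rw [e1, e2, e3, e4, e5]
    push_cast
    ring
  have hlim : (∫ u in Set.Ioi (0 : ℝ), auxUlim ν0 m b α (s * ξ) u *
        ∮ v in C((κ : ℂ) * c', κ * R'), auxVlim ν0 m b α (s * η) v * ((u : ℂ) - v)⁻¹) =
      (κ : ℂ) ^ (ν0 + 1) * ∫ u in Set.Ioi (0 : ℝ),
          ∮ v in C(c', R'),
            hyp0F1 ((ν0 : ℝ) + 1) (-((u * ξ : ℝ) : ℂ)) *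
              hyp0F1 ((ν0 : ℝ) + 1) (-(v * (η : ℂ))) *
              (u : ℂ) ^ ν0 * Complex.exp (-(u : ℂ) + v) * ((u : ℂ) - v)⁻¹ *
              ∏ j ∈ Finset.range m, ((u : ℂ) + (σ j : ℂ)) / (v + (σ j : ℂ)) := by
    have h1 := integral_comp_mul_left_Ioi (fun u : ℝ => auxUlim ν0 m b α (s * ξ) u *
        ∮ v in C((κ : ℂ) * c', κ * R'), auxVlim ν0 m b α (s * η) v * ((u : ℂ) - v)⁻¹) 0 hκ0
    rw [mul_zero, Complex.real_smul] at h1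
    have h2 : ∀ I : ℂ, I = (κ : ℂ) * (((κ⁻¹ : ℝ) : ℂ) * I) := by
      intro I
      push_cast
      field_simp
    rw [h2 (∫ u in Set.Ioi (0 : ℝ), auxUlim ν0 m b α (s * ξ) u *
        ∮ v in C((κ : ℂ) * c', κ * R'), auxVlim ν0 m b α (s * η) v * ((u : ℂ) - v)⁻¹), ← h1,
      pow_succ, mul_comm ((κ : ℂ) ^ ν0), mul_assoc]
    congr 1
    rw [← integral_const_mul]
    apply integral_congr_ae
    refine Eventually.of_forall fun u => ?_
    simp only []
    rw [aux_circle_scale, mul_left_comm, ← circleIntegral.integral_const_mul,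
      ← circleIntegral.integral_const_mul, ← circleIntegral.integral_const_mul]
    refine congrArg (fun f => circleIntegral f c' R') (funext fun v => ?_)
    rw [hpt]
    field_simp
  have hgoal : (2 * Real.pi * Complex.I)⁻¹ *
      ((s * (s * η) ^ ν0 / Real.Gamma ((ν0 : ℝ) + 1) ^ 2 : ℝ) : ℂ) * (κ : ℂ) ^ (ν0 + 1) =
      (2 * Real.pi * Complex.I)⁻¹ *
        ((η ^ ν0 / Real.Gamma ((ν0 : ℝ) + 1) ^ 2 : ℝ) : ℂ) := by
    rw [mul_assoc]
    congr 1
    rw [← Complex.ofReal_pow, ← Complex.ofReal_mul]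
    congr 1
    calc s * (s * η) ^ ν0 / Real.Gamma ((ν0 : ℝ) + 1) ^ 2 * κ ^ (ν0 + 1)
        = (s * κ) * (s * κ) ^ ν0 * (η ^ ν0 / Real.Gamma ((ν0 : ℝ) + 1) ^ 2) := by
          rw [mul_pow, mul_pow, pow_succ]
          ring
      _ = _ := by rw [hsκ]; simp
  rw [hlim, ← mul_assoc, hgoal] at hmain2
  refine hmain2.congr' ?_
  filter_upwards [eventually_gt_atTop m] with N hN
  rw [aux_KN_eq ν0 m N hN b hb α (cc N) (RR N) (s * ξ) (s * η), ← mul_assoc]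
  congr 1
  rw [mul_left_comm]
  congr 1
  rw [← Complex.ofReal_mul]
  congr 1
  have hexp : Real.exp (s * (η - ξ)) * Real.exp (s * ξ) * Real.exp (-(s * η)) = 1 := by
    rw [← Real.exp_add, ← Real.exp_add, Real.exp_eq_one_iff]
    ring
  linear_combination (-(s * (s * η) ^ ν0 / Real.Gamma ((ν0 : ℝ) + 1) ^ 2)) * hexp

end
end
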